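/- Let X̂ be the (n+1)×n generic matrix, Y the generic n×1 column over a field K, and J = I_1(X̂Y). Then projdim_{R̂}(R̂/J) = n+1 and dim(R̂/J) ≥ n² + n, hence depth(R̂/J) = n² + n − 1 < dim(R̂/J), so R̂/J is not Cohen–Macaulay. -/

import Mathlib

open MvPolynomial Matrix

/-- `β` is the sequence of total Betti numbers of `M`: there is a free resolution
`⋯ → R^(β 1) → R^(β 0) → M → 0` which is minimal in the sense that all differentials
have image inside `m` times the ambient free module. -/
def IsMinimalFreeRes {R : Type*} [CommRing R] (m : Ideal R)
    (M : Type*) [AddCommGroup M] [Module R M] (β : ℕ → ℕ) : Prop :=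
  ∃ (f : (i : ℕ) → ((Fin (β (i + 1)) → R) →ₗ[R] (Fin (β i) → R)))
    (ε : (Fin (β 0) → R) →ₗ[R] M),
      Function.Surjective ε ∧
      LinearMap.ker ε = LinearMap.range (f 0) ∧
      (∀ i, LinearMap.ker (f i) = LinearMap.range (f (i + 1))) ∧
      (∀ i, LinearMap.range (f i) ≤ m • (⊤ : Submodule R (Fin (β i) → R)))

/-- The depth of a module `M` with respect to an ideal `m`: the supremum of the lengths
of `M`-regular sequences consisting of elements of `m`. -/
noncomputable def moduleDepth {R : Type*} [CommRing R] (m : Ideal R)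
    (M : Type*) [AddCommGroup M] [Module R M] : ℕ∞ :=
  sSup {k : ℕ∞ | ∃ rs : List R, (rs.length : ℕ∞) = k ∧ (∀ r ∈ rs, r ∈ m) ∧
    RingTheory.Sequence.IsWeaklyRegular M rs}

/-!
Cut `X̂` down, by `n² + n - 1` linear forms, to the matrix with `x₀₀` on the diagonal and `y` on the
subdiagonal: `g₀` becomes `x₀₀y₀`, and every other `gᵢ` becomes `yᵢ₋₁² + x₀₀yᵢ`, with no second
summand for `i = n`.

* The forms are regular on `R̂ ⧸ (g₁, …, gₙ)`: they form a regular sequence together with `x₀₀` and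
  `g₁, …, gₙ`, since `gᵢ` is `yᵢ₋₁²` modulo the forms and `x₀₀`. To add `g₀` one needs the colon
  ideal `(g₁, …, gₙ) : g₀`. By Cramer's rule it contains the maximal minor `δ` avoiding row `0`;
  modulo the forms it is generated by `g₁, …, gₙ, δ`, and graded Nakayama removes the forms again,
  one at a time.
* Modulo `J` and the forms, `∏ yⱼ` is nonzero and killed by all variables. Hence the forms are a
  maximal regular sequence on `R̂ ⧸ J`, and the depth is `n² + n - 1`.
* The forms extend by `x₀₀` and the `yⱼ` to a regular sequence generating the irrelevant ideal. In
  a minimal free resolution, each syzygy module gains one more element of it, up to step `n + 1`;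
  there the whole sequence is regular, so the next differential vanishes.
-/

open RingTheory.Sequence
open scoped Pointwise HomogeneousIdeal

section RegularSequences

variable {R M : Type*} [CommRing R] [AddCommGroup M] [Module R M] {m : Ideal R}

theorem eq_bot_of_le_ideal_smul [IsHausdorff m M] {N : Submodule R M} (h : N ≤ m • N) :
    N = ⊥ := by
  have le_pow_smul (k : ℕ) : N ≤ m ^ k • ⊤ := by
    induction k with
    | zero => simp
    | succ k ih =>
      calc N ≤ m • N := h
        _ ≤ m • m ^ k • ⊤ := Submodule.smul_mono le_rfl ih
        _ = m ^ (k + 1) • ⊤ := by rw [pow_succ', Submodule.mul_smul]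
  rw [eq_bot_iff, ← IsHausdorff.iInf_pow_smul (I := m) (M := M) ‹_›]
  exact le_iInf le_pow_smul

theorem le_of_le_sup_ideal_smul {L N : Submodule R M} [IsHausdorff m (M ⧸ L)]
    (h : N ≤ L ⊔ m • N) : N ≤ L := by
  have map_eq_bot : N.map L.mkQ = ⊥ := by
    refine eq_bot_of_le_ideal_smul (m := m) ?_
    calc N.map L.mkQ ≤ (L ⊔ m • N).map L.mkQ := Submodule.map_mono h
      _ = m • N.map L.mkQ := by
        rw [Submodule.map_sup, Submodule.mkQ_map_self, bot_sup_eq, Submodule.map_smul'']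
  rw [← L.ker_mkQ]
  exact Submodule.map_le_iff_le_comap.1 map_eq_bot.le

theorem isWeaklyRegular_of_perm_of_isHausdorff {rs rs' : List R} (h : IsWeaklyRegular M rs)
    (hperm : rs.Perm rs') (hm : ∀ r ∈ rs, r ∈ m)
    (hM : ∀ ts : List R, ts ⊆ rs →
      IsHausdorff m (M ⧸ (Ideal.ofList ts • ⊤ : Submodule R M))) :
    IsWeaklyRegular M rs' := by
  refine h.prototype_perm hperm fun a b ts hsub => ?_
  intro K hK
  have := hM ts fun t ht => hsub.subset (by simp [ht])
  refine eq_bot_of_le_ideal_smul (m := m) ?_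
  calc K = a • K := hK
    _ ≤ m • K := by
      rintro _ ⟨x, hx, rfl⟩
      exact Submodule.smul_mem_smul (hm a (hsub.subset List.mem_cons_self)) hx

theorem isWeaklyRegular_cons_quotient_iff (I : Ideal R) (r : R) (rs : List R) :
    IsWeaklyRegular (R ⧸ I) (r :: rs) ↔
      (∀ f, r * f ∈ I → f ∈ I) ∧ IsWeaklyRegular (R ⧸ (I ⊔ Ideal.span {r})) rs := by
  have map_span : Submodule.map I.mkQ (Ideal.span {r}) = r • (⊤ : Submodule R (R ⧸ I)) := by
    rw [← Submodule.ideal_span_singleton_smul, ← I.range_mkQ, ← Submodule.map_top,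
      ← Submodule.map_smul'', smul_eq_mul, Ideal.mul_top]
  let e : QuotSMulTop r (R ⧸ I) ≃ₗ[R] R ⧸ (I ⊔ Ideal.span {r}) :=
    (Submodule.quotEquivOfEq _ _ map_span.symm).trans
      (Submodule.quotientQuotientEquivQuotientSup I (Ideal.span {r}))
  rw [isWeaklyRegular_cons_iff, e.isWeaklyRegular_congr rs,
    isSMulRegular_quotient_iff_mem_of_smul_mem]
  rfl

theorem isWeaklyRegular_append_iff_quotient (rs ts : List R) :
    IsWeaklyRegular R (rs ++ ts) ↔
      IsWeaklyRegular R rs ∧ IsWeaklyRegular (R ⧸ Ideal.ofList rs) ts := by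
  rw [isWeaklyRegular_append_iff, smul_eq_mul, Ideal.mul_top]

theorem colon_le_of_colon_sup_span_le {I L : Ideal R} {D : Set R} {c : R}
    [IsHausdorff m (R ⧸ L)] (hc : c ∈ m) (hcI : ∀ f, c * f ∈ I → f ∈ I) (hL : L ≤ I.colon D)
    (h : (I ⊔ Ideal.span {c}).colon D ≤ L ⊔ Ideal.span {c}) : I.colon D ≤ L := by
  refine le_of_le_sup_ideal_smul (m := m) fun f hf => ?_
  obtain ⟨l, hl, q, rfl⟩ : ∃ l ∈ L, ∃ q, l + c * q = f := by
    obtain ⟨l, hl, _, hq, hlq⟩ :=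
      Submodule.mem_sup.1 (h (Submodule.colon_mono le_sup_left subset_rfl hf))
    obtain ⟨q, rfl⟩ := Ideal.mem_span_singleton'.1 hq
    exact ⟨l, hl, q, by rw [← hlq, mul_comm]⟩
  have hq : q ∈ I.colon D := Submodule.mem_colon.2 fun d hd => hcI _ <| by
    have hcq : c * q ∈ I.colon D := by simpa using sub_mem hf (hL hl)
    simpa [mul_assoc] using Submodule.mem_colon.1 hcq d hd
  exact Submodule.add_mem_sup hl (Submodule.smul_mem_smul hc hq)

theorem mem_sup_span_of_mul_mem {I L : Ideal R} {h θ f : R} (hθ : ∀ f, θ * f ∈ I → f ∈ I)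
    (hLI : L ≤ I.colon {h}) (hcolon : (I ⊔ Ideal.span {θ}).colon {h} ≤ L ⊔ Ideal.span {θ})
    (hf : θ * f ∈ I ⊔ Ideal.span {h}) : f ∈ I ⊔ Ideal.span {h} := by
  obtain ⟨i, hi, _, hq, hiq⟩ := Submodule.mem_sup.1 hf
  obtain ⟨q, rfl⟩ := Ideal.mem_span_singleton'.1 hq
  obtain ⟨l, hl, _, hp, rfl⟩ : ∃ l ∈ L, ∃ p ∈ Ideal.span {θ}, l + p = q := by
    refine Submodule.mem_sup.1 (hcolon (Submodule.mem_colon_singleton.2 ?_))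
    have : q * h = θ * f - i := by linear_combination hiq
    rw [smul_eq_mul, this, sub_eq_neg_add]
    exact Submodule.add_mem_sup (neg_mem hi)
      (Ideal.mul_mem_right _ _ (Ideal.mem_span_singleton_self θ))
  obtain ⟨p, rfl⟩ := Ideal.mem_span_singleton'.1 hp
  have hlh : l * h ∈ I := Submodule.mem_colon_singleton.1 (hLI hl)
  have hfp : f - p * h ∈ I := hθ _ (by
    have : θ * (f - p * h) = i + l * h := by linear_combination -hiq
    exact this ▸ add_mem hi hlh)
  rw [← sub_add_cancel f (p * h)]
  exact Submodule.add_mem_sup hfp (Ideal.mul_mem_left _ _ (Ideal.mem_span_singleton_self h))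

end RegularSequences

section Graded

variable {A σ : Type*} [CommRing A] [SetLike σ A] [AddSubgroupClass σ A] (𝒜 : ℕ → σ) [GradedRing 𝒜]

theorem decompose_eq_zero_of_mem_irrelevant_pow {k : ℕ} {a : A} (ha : a ∈ 𝒜₊.toIdeal ^ k)
    {d : ℕ} (hd : d < k) : (DirectSum.decompose 𝒜 a d : A) = 0 := by
  induction k generalizing a d with
  | zero => simp at hd
  | succ k ih =>
    rw [pow_succ'] at ha
    induction ha using Submodule.mul_induction_on' with
    | mem_mul_mem b hb c hc =>
      rw [DirectSum.decompose_mul, DirectSum.coe_mul_apply_eq_sum_antidiagonal]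
      refine Finset.sum_eq_zero fun p hp => ?_
      rw [Finset.HasAntidiagonal.mem_antidiagonal] at hp
      rcases Nat.eq_zero_or_pos p.1 with h0 | hpos
      · rw [h0, show (DirectSum.decompose 𝒜 b 0 : A) = 0 from hb, zero_mul]
      · rw [ih hc (by omega), mul_zero]
    | add b _ c _ hb hc => simp [hb, hc]

variable {𝒜}

theorem isHausdorff_irrelevant_quotient {L : Ideal A} (hL : L.IsHomogeneous 𝒜) :
    IsHausdorff (𝒜₊).toIdeal (A ⧸ L) := by
  refine ⟨fun x hx => ?_⟩
  obtain ⟨x, rfl⟩ := L.mkQ_surjective x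
  refine (Submodule.Quotient.mk_eq_zero L).2 ((hL.mem_iff).2 fun d => ?_)
  obtain ⟨a, ha, l, hl, rfl⟩ : ∃ a ∈ 𝒜₊.toIdeal ^ (d + 1), ∃ l ∈ L, a + l = x := by
    have hmem : L.mkQ x ∈ Submodule.map L.mkQ (𝒜₊.toIdeal ^ (d + 1)) := by
      have := SModEq.zero.1 (hx (d + 1))
      rwa [← L.range_mkQ, ← Submodule.map_top, ← Submodule.map_smul'', smul_eq_mul,
        Ideal.mul_top] at this
    obtain ⟨a, ha, hax⟩ := hmem
    exact ⟨a, ha, x - a, (Submodule.Quotient.eq L).1 hax.symm, by ring⟩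
  rw [DirectSum.decompose_add, DirectSum.add_apply, AddMemClass.coe_add,
    decompose_eq_zero_of_mem_irrelevant_pow 𝒜 ha d.lt_succ_self, zero_add]
  exact hL d hl

theorem isHomogeneous_ofList {rs : List A} (h : ∀ r ∈ rs, SetLike.IsHomogeneousElem 𝒜 r) :
    (Ideal.ofList rs).IsHomogeneous 𝒜 :=
  Ideal.homogeneous_span 𝒜 _ h

theorem isWeaklyRegular_of_perm_of_isHomogeneousElem {rs rs' : List A}
    (h : IsWeaklyRegular A rs) (hperm : rs.Perm rs')
    (hom : ∀ r ∈ rs, SetLike.IsHomogeneousElem 𝒜 r) (hm : ∀ r ∈ rs, r ∈ 𝒜₊) :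
    IsWeaklyRegular A rs' := by
  refine isWeaklyRegular_of_perm_of_isHausdorff h hperm hm fun ts hts => ?_
  rw [smul_eq_mul, Ideal.mul_top]
  exact isHausdorff_irrelevant_quotient (isHomogeneous_ofList fun t ht => hom t (hts ht))

theorem colon_le_and_isWeaklyRegular_quotient_sup_span {I L : Ideal A} {h : A} {θs : List A}
    (hL : L.IsHomogeneous 𝒜) (hom : ∀ θ ∈ θs, SetLike.IsHomogeneousElem 𝒜 θ)
    (hm : ∀ θ ∈ θs, θ ∈ 𝒜₊) (hLI : L ≤ I.colon {h}) (hI : IsWeaklyRegular (A ⧸ I) θs)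
    (hcolon : (I ⊔ Ideal.ofList θs).colon {h} ≤ L ⊔ Ideal.ofList θs) :
    I.colon {h} ≤ L ∧ IsWeaklyRegular (A ⧸ (I ⊔ Ideal.span {h})) θs := by
  induction θs generalizing I L with
  | nil => simpa using hcolon
  | cons θ θs ih =>
    rw [isWeaklyRegular_cons_quotient_iff] at hI
    rw [List.forall_mem_cons] at hom hm
    obtain ⟨colon_θ, regular_θs⟩ := ih (I := I ⊔ Ideal.span {θ}) (L := L ⊔ Ideal.span {θ})
      (hL.sup (Ideal.homogeneous_span 𝒜 _ (by simpa using hom.1))) hom.2 hm.2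
      (sup_le (hLI.trans (Submodule.colon_mono le_sup_left subset_rfl))
        (le_sup_right.trans Ideal.le_colon)) hI.2
      (by simpa only [Ideal.ofList_cons, sup_assoc] using hcolon)
    have := isHausdorff_irrelevant_quotient hL
    refine ⟨colon_le_of_colon_sup_span_le (m := (𝒜₊).toIdeal) hm.1 hI.1 hLI colon_θ,
      (isWeaklyRegular_cons_quotient_iff _ _ _).2
        ⟨fun f => mem_sup_span_of_mul_mem hI.1 hLI colon_θ, ?_⟩⟩
    rwa [sup_right_comm]

end Graded

section MaximalWeaklyRegular

open CategoryTheory CategoryTheory.Abelian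

/-- A weakly `M`-regular sequence `rs` such that `M ⧸ rs M` contains a nonzero element killed by
`m`. When `rs` lies in `m`, no further element of `m` can be appended, which is how `rs` computes
the depth. -/
structure IsMaximalWeaklyRegular {R : Type*} [CommRing R] (m : Ideal R) (M : Type*)
    [AddCommGroup M] [Module R M] (rs : List R) : Prop where
  isWeaklyRegular : IsWeaklyRegular M rs
  exists_smul_mem : ∃ e ∉ (Ideal.ofList rs • ⊤ : Submodule R M),
    ∀ a ∈ m, a • e ∈ (Ideal.ofList rs • ⊤ : Submodule R M)

section

variable {R : Type*} [CommRing R] {m : Ideal R} {M : Type*} [AddCommGroup M] [Module R M]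

theorem mem_ofList_cons_smul_top_iff {r : R} {rs : List R} {x : M} :
    x ∈ (Ideal.ofList (r :: rs) • ⊤ : Submodule R M) ↔
      (Submodule.Quotient.mk x : QuotSMulTop r M) ∈
        (Ideal.ofList rs • ⊤ : Submodule R (QuotSMulTop r M)) := by
  have map_mkQ : (Ideal.ofList rs • ⊤ : Submodule R M).map (Submodule.mkQ _) =
      (Ideal.ofList rs • ⊤ : Submodule R (QuotSMulTop r M)) := by
    rw [Submodule.map_smul'', Submodule.map_top, Submodule.range_mkQ]
  rw [← map_mkQ, ← Submodule.mkQ_apply, ← Submodule.mem_comap, Submodule.comap_map_mkQ,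
    Ideal.ofList_cons, Submodule.sup_smul, Submodule.ideal_span_singleton_smul]

namespace IsMaximalWeaklyRegular

theorem nil_iff : IsMaximalWeaklyRegular m M [] ↔ ∃ e : M, e ≠ 0 ∧ ∀ a ∈ m, a • e = 0 :=
  ⟨fun h => by simpa using h.exists_smul_mem, fun h => ⟨.nil R M, by simpa using h⟩⟩

theorem cons_iff {r : R} {rs : List R} :
    IsMaximalWeaklyRegular m M (r :: rs) ↔
      IsSMulRegular M r ∧ IsMaximalWeaklyRegular m (QuotSMulTop r M) rs := by
  have exists_iff : (∃ e ∉ (Ideal.ofList (r :: rs) • ⊤ : Submodule R M),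
      ∀ a ∈ m, a • e ∈ (Ideal.ofList (r :: rs) • ⊤ : Submodule R M)) ↔
      ∃ e ∉ (Ideal.ofList rs • ⊤ : Submodule R (QuotSMulTop r M)),
        ∀ a ∈ m, a • e ∈ (Ideal.ofList rs • ⊤ : Submodule R (QuotSMulTop r M)) := by
    simp only [mem_ofList_cons_smul_top_iff, (Submodule.mkQ_surjective _).exists,
      Submodule.mkQ_apply, Submodule.Quotient.mk_smul]
  constructor
  · rintro ⟨hw, he⟩
    rw [isWeaklyRegular_cons_iff] at hw
    exact ⟨hw.1, hw.2, exists_iff.1 he⟩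
  · rintro ⟨hr, hw, he⟩
    exact ⟨(isWeaklyRegular_cons_iff _ _ _).2 ⟨hr, hw⟩, exists_iff.2 he⟩

theorem of_quotient {J : Ideal R} {rs : List R} {e : R} (hrs : IsWeaklyRegular (R ⧸ J) rs)
    (he : e ∉ J ⊔ Ideal.ofList rs)
    (hm : ∀ a ∈ m, a * e ∈ J ⊔ Ideal.ofList rs) : IsMaximalWeaklyRegular m (R ⧸ J) rs := by
  have mkQ_mem_iff (f : R) : J.mkQ f ∈ Ideal.ofList rs • (⊤ : Submodule R (R ⧸ J)) ↔
      f ∈ J ⊔ Ideal.ofList rs := by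
    rw [← Submodule.mem_comap, ← J.range_mkQ, ← Submodule.map_top, ← Submodule.map_smul'',
      smul_eq_mul, Ideal.mul_top, Submodule.comap_map_mkQ]
  exact ⟨hrs, J.mkQ e, fun h => he ((mkQ_mem_iff e).1 h), fun a ha => (mkQ_mem_iff _).2 (hm a ha)⟩

theorem nontrivial {rs : List R} (h : IsMaximalWeaklyRegular m M rs) : Nontrivial M := by
  obtain ⟨e, he, -⟩ := h.exists_smul_mem
  exact ⟨e, 0, fun h0 => he (h0 ▸ zero_mem _)⟩

theorem ne_top {rs : List R} (h : IsMaximalWeaklyRegular m M rs) : m ≠ ⊤ := by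
  rintro rfl
  obtain ⟨e, he, hme⟩ := h.exists_smul_mem
  exact he (by simpa using hme 1 trivial)

theorem smul_top_ne_top [Module.Finite R M] {rs : List R} (h : IsMaximalWeaklyRegular m M rs) :
    m • (⊤ : Submodule R M) ≠ ⊤ := by
  intro htop
  obtain ⟨e, he, hme⟩ := h.exists_smul_mem
  obtain ⟨r, hr, hr0⟩ := Submodule.exists_sub_one_mem_and_smul_eq_zero_of_fg_of_le_smul m
    (⊤ : Submodule R M) Module.Finite.fg_top htop.ge
  have := hme (r - 1) hr
  rw [sub_smul, hr0 e trivial, one_smul, zero_sub, neg_mem_iff] at this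
  exact he this

theorem of_exact_nil {Z F : Type*} [AddCommGroup Z] [Module R Z] [AddCommGroup F] [Module R F]
    {i : Z →ₗ[R] F} {p : F →ₗ[R] M} (hi : Function.Injective i) (hip : Function.Exact i p)
    (hp : Function.Surjective p) {x : R} (hx : x ∈ m) (hF : IsSMulRegular F x)
    (hM : IsMaximalWeaklyRegular m M []) : IsMaximalWeaklyRegular m Z [x] := by
  obtain ⟨e, he, hme⟩ := nil_iff.1 hM
  obtain ⟨e, rfl⟩ := hp e
  have exists_lift (a : R) (ha : a ∈ m) : ∃ z, i z = a • e :=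
    (hip _).1 (by rw [map_smul, hme a ha])
  obtain ⟨z, hz⟩ := exists_lift x hx
  refine ⟨(isWeaklyRegular_singleton_iff Z x).2 (hF.of_injective i hi), z, fun hzx => he ?_,
    fun a ha => ?_⟩ <;>
  simp only [Ideal.ofList_singleton, Submodule.ideal_span_singleton_smul,
    Submodule.mem_smul_pointwise_iff_exists, Submodule.mem_top, true_and] at *
  · obtain ⟨w, rfl⟩ := hzx
    have hwe : i w = e := hF (by simpa only [map_smul] using hz)
    exact (hip e).2 ⟨w, hwe⟩
  · obtain ⟨w, hw⟩ := exists_lift a ha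
    exact ⟨w, hi (by rw [map_smul, map_smul, hw, hz, smul_comm])⟩

theorem of_exact {Z F : Type*} [AddCommGroup Z] [Module R Z] [AddCommGroup F] [Module R F]
    {i : Z →ₗ[R] F} {p : F →ₗ[R] M} (hi : Function.Injective i) (hip : Function.Exact i p)
    (hp : Function.Surjective p) {x : R} (hx : x ∈ m) {rs : List R}
    (hF : IsWeaklyRegular F (rs ++ [x])) (hM : IsMaximalWeaklyRegular m M rs) :
    IsMaximalWeaklyRegular m Z (rs ++ [x]) := by
  induction rs generalizing Z F M with
  | nil => exact of_exact_nil hi hip hp hx ((isWeaklyRegular_singleton_iff F x).1 hF) hM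
  | cons r rs ih =>
    rw [List.cons_append, isWeaklyRegular_cons_iff] at hF
    obtain ⟨hr, hM⟩ := cons_iff.1 hM
    have map_injective : Function.Injective (QuotSMulTop.map r i) := by
      rw [← LinearMap.exact_zero_iff_injective Z] at hi
      simpa only [map_zero, LinearMap.exact_zero_iff_injective] using
        QuotSMulTop.map_first_exact_on_four_term_exact_of_isSMulRegular_last hi hip hr
    exact cons_iff.2 ⟨hF.1.of_injective i hi, ih map_injective (QuotSMulTop.map_exact r hip hp)
      (QuotSMulTop.map_surjective r hp) hF.2 hM⟩

end IsMaximalWeaklyRegular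

end

universe u

section

variable {R : Type u} [CommRing R] {m : Ideal R} {M : Type u} [AddCommGroup M] [Module R M]

namespace IsMaximalWeaklyRegular

theorem exists_ext_nontrivial {M : ModuleCat.{u} R} {rs : List R}
    (h : IsMaximalWeaklyRegular m M rs) :
    ∃ i ≤ rs.length, Nontrivial (Ext (ModuleCat.of R (R ⧸ m)) M i) := by
  induction rs generalizing M with
  | nil =>
    obtain ⟨e, he, hme⟩ := nil_iff.1 h
    let φ : (R ⧸ m) →ₗ[R] M := Submodule.liftQ m (LinearMap.toSpanSingleton R M e) hme
    have φ_one : φ (Submodule.Quotient.mk 1) = e := one_smul R e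
    have φ_ne : ModuleCat.ofHom φ ≠ 0 := fun h0 => he <| by
      rw [← φ_one, show φ = 0 from congrArg ModuleCat.Hom.hom h0, LinearMap.zero_apply]
    exact ⟨0, le_rfl, ⟨_, 0, Ext.addEquiv₀.symm.map_ne_zero_iff.2 φ_ne⟩⟩
  | cons r rs ih =>
    obtain ⟨hr, h⟩ := cons_iff.1 h
    obtain ⟨i, hi, hne⟩ := ih (M := ModuleCat.of R (QuotSMulTop r M)) h
    by_contra! hsub
    have zero_left := AddCommGrpCat.isZero_of_iff_subsingleton.mpr (hsub i (by simp; omega))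
    have zero_right :=
      AddCommGrpCat.isZero_of_iff_subsingleton.mpr (hsub (i + 1) (by simpa using hi))
    have : Subsingleton (Ext (ModuleCat.of R (R ⧸ m)) (ModuleCat.of R (QuotSMulTop r M)) i) :=
      AddCommGrpCat.subsingleton_of_isZero <| ShortComplex.Exact.isZero_of_both_zeros
        (Ext.covariant_sequence_exact₃' _ hr.smulShortComplex_shortExact i (i + 1) rfl)
        (zero_left.eq_zero_of_src _) (zero_right.eq_zero_of_tgt _)
    exact not_subsingleton _ this

theorem length_le [IsNoetherianRing R] [Module.Finite R M] {rs ts : List R}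
    (h : IsMaximalWeaklyRegular m M rs) (hts : ∀ t ∈ ts, t ∈ m) (hw : IsWeaklyRegular M ts) :
    ts.length ≤ rs.length := by
  have regular_ts : IsRegular M ts := ⟨hw, fun htop => h.smul_top_ne_top <| top_le_iff.1 <|
    htop.trans_le (Submodule.smul_mono_left (Ideal.span_le.2 hts))⟩
  have ext_vanishes := ModuleCat.subsingleton_ext_of_exists_isRegular m
    (ModuleCat.of R (R ⧸ m)) (by rw [Module.support_eq_zeroLocus, Ideal.annihilator_quotient])
    (ModuleCat.of R M) h.smul_top_ne_top.lt_top ts hts regular_ts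
  obtain ⟨i, hi, hne⟩ := exists_ext_nontrivial (M := ModuleCat.of R M) h
  by_contra! hlt
  exact not_subsingleton _ (ext_vanishes i (by omega))

theorem moduleDepth_eq [IsNoetherianRing R] [Module.Finite R M] {rs : List R}
    (h : IsMaximalWeaklyRegular m M rs) (hrs : ∀ r ∈ rs, r ∈ m) : moduleDepth m M = rs.length := by
  refine IsLUB.sSup_eq (IsGreatest.isLUB ⟨⟨rs, rfl, hrs, h.isWeaklyRegular⟩, ?_⟩)
  rintro _ ⟨ts, rfl, hts, hw⟩
  exact_mod_cast h.length_le hts hw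

end IsMaximalWeaklyRegular

end

end MaximalWeaklyRegular

section MinimalFreeRes

theorem isWeaklyRegular_of_flat {R F : Type*} [CommRing R] [AddCommGroup F] [Module R F]
    [Module.Flat R F] {rs : List R} (h : IsWeaklyRegular R rs) : IsWeaklyRegular F rs :=
  ((TensorProduct.rid R F).isWeaklyRegular_congr rs).1 h.isWeaklyRegular_lTensor

theorem ker_inf_ofList_smul_top_le {R M F : Type*} [CommRing R] [AddCommGroup M] [Module R M]
    [AddCommGroup F] [Module R F] {p : F →ₗ[R] M} (hp : Function.Surjective p) {rs : List R}
    (hM : IsWeaklyRegular M rs) :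
    LinearMap.ker p ⊓ Ideal.ofList rs • ⊤ ≤ Ideal.ofList rs • LinearMap.ker p := by
  rintro z ⟨hz, hz'⟩
  have exact_zero : Function.Exact (0 : LinearMap.ker p →ₗ[R] LinearMap.ker p)
      (LinearMap.ker p).subtype :=
    (LinearMap.exact_zero_iff_injective _ _).2 (Submodule.subtype_injective _)
  obtain ⟨w, hw⟩ := (map_first_exact_on_four_term_right_exact_of_isSMulRegular_last exact_zero
    (LinearMap.exact_subtype_ker_map p) hp hM (Submodule.Quotient.mk ⟨z, hz⟩)).1
      ((Submodule.Quotient.mk_eq_zero _).2 hz')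
  obtain ⟨w, rfl⟩ := Submodule.Quotient.mk_surjective _ w
  have hz_mem : (⟨z, hz⟩ : LinearMap.ker p) ∈ Ideal.ofList rs • (⊤ : Submodule R _) := by
    rw [← Submodule.Quotient.mk_eq_zero, ← hw, Submodule.mapQ_apply, LinearMap.zero_apply,
      Submodule.Quotient.mk_zero]
  have mem_map := Submodule.mem_map_of_mem (f := (LinearMap.ker p).subtype) hz_mem
  rwa [Submodule.map_smul'', Submodule.map_subtype_top] at mem_map

theorem ker_eq_bot_of_le_ofList_smul_top {R M F : Type*} [CommRing R] [AddCommGroup M] [Module R M]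
    [AddCommGroup F] [Module R F] {m : Ideal R} [IsHausdorff m F] {p : F →ₗ[R] M}
    (hp : Function.Surjective p) {rs : List R} (hM : IsWeaklyRegular M rs)
    (hm : Ideal.ofList rs = m) (hker : LinearMap.ker p ≤ m • ⊤) : LinearMap.ker p = ⊥ := by
  subst hm
  refine eq_bot_of_le_ideal_smul (m := Ideal.ofList rs) ?_
  exact (le_inf le_rfl hker).trans (ker_inf_ofList_smul_top_le hp hM)

theorem eq_zero_of_pi_ideal_smul_top_eq_top {R : Type*} [CommRing R] {m : Ideal R} (hm : m ≠ ⊤)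
    {b : ℕ} (h : m • (⊤ : Submodule R (Fin b → R)) = ⊤) : b = 0 := by
  by_contra hb
  have := NeZero.mk hb
  have smul_top_le : (m • ⊤ : Submodule R (Fin b → R)) ≤
      Submodule.comap (LinearMap.proj (0 : Fin b)) m :=
    Submodule.smul_le.2 fun r hr v _ => m.mul_mem_right _ hr
  exact hm (m.eq_top_iff_one.2 (smul_top_le (h.ge (Submodule.mem_top (x := 1)))))

namespace IsMinimalFreeRes

variable {R : Type u} [CommRing R] {m : Ideal R} {M : Type u} [AddCommGroup M] [Module R M]
  {β : ℕ → ℕ}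

theorem exists_syzygy (h : IsMinimalFreeRes m M β) :
    ∃ ε : (Fin (β 0) → R) →ₗ[R] M, Function.Surjective ε ∧ LinearMap.ker ε ≤ m • ⊤ ∧
      IsMinimalFreeRes m (LinearMap.ker ε) fun i => β (i + 1) := by
  obtain ⟨f, ε, surj_ε, ker_ε, ker_f, range_f⟩ := h
  refine ⟨ε, surj_ε, ker_ε.trans_le (range_f 0), fun i => f (i + 1),
    (f 0).codRestrict (LinearMap.ker ε) fun x => ker_ε ▸ ⟨x, rfl⟩, ?_, ?_, fun i => ker_f (i + 1),
    fun i => range_f (i + 1)⟩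
  · rintro ⟨z, hz⟩
    obtain ⟨x, rfl⟩ := ker_ε.le hz
    exact ⟨x, rfl⟩
  · rw [LinearMap.ker_codRestrict, ker_f]

theorem eq_zero_of_subsingleton [Subsingleton M] (hm : m ≠ ⊤) (h : IsMinimalFreeRes m M β)
    (i : ℕ) : β i = 0 := by
  induction i generalizing M β with
  | zero =>
    obtain ⟨ε, -, ker_le, -⟩ := h.exists_syzygy
    refine eq_zero_of_pi_ideal_smul_top_eq_top hm (top_le_iff.1 (le_trans ?_ ker_le))
    exact fun x _ => Subsingleton.elim _ _
  | succ i ih =>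
    obtain ⟨ε, -, ker_le, hker⟩ := h.exists_syzygy
    have b_zero : β 0 = 0 := eq_zero_of_pi_ideal_smul_top_eq_top hm
      (top_le_iff.1 (le_trans (fun x _ => Subsingleton.elim _ _) ker_le))
    have : IsEmpty (Fin (β 0)) := by rw [b_zero]; infer_instance
    exact ih hker

theorem betti_ne_zero_and_eq_zero_of_length_lt [IsDomain R] [IsNoetherianRing R]
    (h : IsMinimalFreeRes m M β) {rs zs : List R} (hR : IsWeaklyRegular R (rs ++ zs))
    (hm : Ideal.ofList (rs ++ zs) = m) (hM : IsMaximalWeaklyRegular m M rs) :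
    β zs.length ≠ 0 ∧ ∀ i, zs.length < i → β i = 0 := by
  induction zs generalizing M β rs with
  | nil =>
    rw [List.append_nil] at hm
    have hm_top := hM.ne_top
    obtain ⟨ε, surj_ε, ker_le, hker⟩ := h.exists_syzygy
    have := IsHausdorff.of_isTorsionFree m (Fin (β 0) → R) hm_top
    have ker_eq_bot : LinearMap.ker ε = ⊥ :=
      ker_eq_bot_of_le_ofList_smul_top surj_ε hM.isWeaklyRegular hm ker_le
    refine ⟨fun (b_zero : β 0 = 0) => ?_, fun i hi => ?_⟩
    · have : IsEmpty (Fin (β 0)) := by rw [b_zero]; infer_instance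
      have := surj_ε.subsingleton
      exact not_subsingleton_iff_nontrivial.2 hM.nontrivial this
    · have : Subsingleton (LinearMap.ker ε) := (Submodule.subsingleton_iff_eq_bot).2 ker_eq_bot
      obtain ⟨i, rfl⟩ := Nat.exists_eq_succ_of_ne_zero hi.ne'
      exact hker.eq_zero_of_subsingleton hm_top i
  | cons z zs ih =>
    obtain ⟨ε, surj_ε, -, hker⟩ := h.exists_syzygy
    rw [List.append_cons] at hR hm
    have hz : z ∈ m := hm ▸ Ideal.subset_span (by simp)
    have regular_pi : IsWeaklyRegular (Fin (β 0) → R) (rs ++ [z]) :=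
      isWeaklyRegular_of_flat ((isWeaklyRegular_append_iff _ _ _).1 hR).1
    have hker_max : IsMaximalWeaklyRegular m (LinearMap.ker ε) (rs ++ [z]) :=
      hM.of_exact (Submodule.subtype_injective _) (LinearMap.exact_subtype_ker_map ε) surj_ε hz
        regular_pi
    obtain ⟨betti_ne, betti_zero⟩ := ih hker hR hm hker_max
    refine ⟨betti_ne, fun i hi => ?_⟩
    obtain ⟨i, rfl⟩ := Nat.exists_eq_succ_of_ne_zero hi.ne_bot
    exact betti_zero i (by simpa using hi)

end IsMinimalFreeRes

end MinimalFreeRes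

section GradedResolution

theorem mem_pi_ideal_smul_top {R ι : Type*} [CommRing R] [Finite ι] {m : Ideal R} {v : ι → R}
    (hv : ∀ i, v i ∈ m) : v ∈ m • (⊤ : Submodule R (ι → R)) := by
  classical
  have := Fintype.ofFinite ι
  rw [pi_eq_sum_univ' v]
  exact Submodule.sum_mem _ fun i _ => Submodule.smul_mem_smul (hv i) trivial

theorem IsMinimalFreeRes.exists_of_step {R M : Type*} [CommRing R] [AddCommGroup M] [Module R M]
    {m : Ideal R} {P : ∀ b : ℕ, Submodule R (Fin b → R) → Prop}
    (le_smul_top : ∀ b N, P b N → N ≤ m • ⊤)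
    (step : ∀ b N, P b N → ∃ (c : ℕ) (φ : (Fin c → R) →ₗ[R] (Fin b → R)),
      LinearMap.range φ = N ∧ P c (LinearMap.ker φ))
    {b : ℕ} {ε : (Fin b → R) →ₗ[R] M} (hε : Function.Surjective ε) (hP : P b (LinearMap.ker ε)) :
    ∃ β, IsMinimalFreeRes m M β := by
  let State := Σ b : ℕ, {N : Submodule R (Fin b → R) // P b N}
  have step' (s : State) : ∃ (t : State) (φ : (Fin t.1 → R) →ₗ[R] (Fin s.1 → R)),
      LinearMap.range φ = s.2 ∧ LinearMap.ker φ = t.2 := by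
    obtain ⟨c, φ, range_φ, hφ⟩ := step s.1 s.2 s.2.2
    exact ⟨⟨c, _, hφ⟩, φ, range_φ, rfl⟩
  choose next φ range_φ ker_φ using step'
  let s : ℕ → State := fun i => Nat.rec ⟨b, _, hP⟩ (fun _ => next) i
  refine ⟨fun i => (s i).1, fun i => φ (s i), ε, hε, ?_, fun i => ?_, fun i => ?_⟩
  · exact (range_φ (s 0)).symm
  · rw [ker_φ, range_φ]
  · rw [range_φ]
    exact le_smul_top _ _ (s i).2.2

theorem exists_irredundant_generators {R M : Type*} [CommRing R] [AddCommGroup M] [Module R M]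
    {S : Set M} (hS : (Submodule.span R S).FG) :
    ∃ (c : ℕ) (v : Fin c → M), (∀ k, v k ∈ S) ∧
      Submodule.span R (Set.range v) = Submodule.span R S ∧
      ∀ k, v k ∉ Submodule.span R (v '' {k}ᶜ) := by
  classical
  obtain ⟨T, ⟨hTS, hT⟩, hmin⟩ := exists_minimal_of_wellFoundedLT
    (fun T : Finset M => ↑T ⊆ S ∧ Submodule.span R S = Submodule.span R T)
    (Submodule.fg_span_iff_fg_span_finset_subset S |>.1 hS)
  let v (k : Fin T.card) : M := T.equivFin.symm k
  have v_injective : Function.Injective v :=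
    Subtype.val_injective.comp T.equivFin.symm.injective
  have range_v : Set.range v = T := by
    rw [Set.range_comp' Subtype.val, T.equivFin.symm.surjective.range_eq]
    simp
  refine ⟨T.card, v, fun k => hTS (T.equivFin.symm k).2, range_v ▸ hT.symm, fun k hk => ?_⟩
  have image_compl : v '' {k}ᶜ = ↑(T.erase (v k)) := by
    rw [Set.image_compl_eq_range_sdiff_image v_injective, range_v]
    simp
  rw [image_compl] at hk
  have span_erase : Submodule.span R S = Submodule.span R (T.erase (v k)) := by
    rw [hT, ← Submodule.span_insert_eq_span hk, ← Finset.coe_insert,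
      Finset.insert_erase (T.equivFin.symm k).2]
  exact Finset.notMem_erase (v k) T (hmin
    ⟨(Finset.coe_subset.2 (T.erase_subset _)).trans hTS, span_erase⟩ (T.erase_subset _)
    (T.equivFin.symm k).2)

variable {A σ ι : Type*} [CommRing A] [SetLike σ A] [AddSubgroupClass σ A] (𝒜 : ℕ → σ)
  [GradedRing 𝒜]

/-- Projection onto the degree `e` part of the graded free `A`-module whose `i`-th basis vector
has degree `d i`. -/
def shiftedComponent (d : ι → ℕ) (e : ℕ) : (ι → A) →+ (ι → A) where
  toFun v i := if d i ≤ e then (DirectSum.decompose 𝒜 (v i) (e - d i) : A) else 0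
  map_zero' := by ext; simp
  map_add' v w := by ext i; by_cases h : d i ≤ e <;> simp [h]

/-- `N` is a graded submodule of the free module whose `i`-th basis vector has degree `d i`. -/
def IsShiftedHomogeneous (d : ι → ℕ) (N : Submodule A (ι → A)) : Prop :=
  ∀ v ∈ N, ∀ e, shiftedComponent 𝒜 d e v ∈ N

theorem shiftedComponent_apply (d : ι → ℕ) (e : ℕ) (v : ι → A) (i : ι) :
    shiftedComponent 𝒜 d e v i =
      if d i ≤ e then (DirectSum.decompose 𝒜 (v i) (e - d i) : A) else 0 :=
  rfl

theorem shiftedComponent_shiftedComponent (d : ι → ℕ) (e : ℕ) (v : ι → A) :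
    shiftedComponent 𝒜 d e (shiftedComponent 𝒜 d e v) = shiftedComponent 𝒜 d e v := by
  ext i
  by_cases h : d i ≤ e <;> simp [shiftedComponent_apply, h]

theorem exists_sum_shiftedComponent_eq [Finite ι] (d : ι → ℕ) (v : ι → A) :
    ∃ s : Finset ℕ, ∑ e ∈ s, shiftedComponent 𝒜 d e v = v := by
  classical
  have := Fintype.ofFinite ι
  let degrees (i : ι) : Finset ℕ :=
    (DirectSum.decompose 𝒜 (v i)).support.map (addLeftEmbedding (d i))
  refine ⟨Finset.univ.biUnion degrees, ?_⟩
  ext i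
  have degrees_subset := Finset.subset_biUnion_of_mem degrees (Finset.mem_univ i)
  rw [Finset.sum_apply, ← Finset.sum_subset degrees_subset, Finset.sum_map]
  · have component_add (k : ℕ) : shiftedComponent 𝒜 d (d i + k) v i =
        (DirectSum.decompose 𝒜 (v i) k : A) := by
      rw [shiftedComponent_apply, if_pos (Nat.le_add_right _ _), Nat.add_sub_cancel_left]
    simp only [addLeftEmbedding_apply, component_add, DirectSum.sum_support_decompose]
  · intro e _ he
    rw [shiftedComponent_apply]
    split_ifs with hde
    · by_contra hne
      exact he (Finset.mem_map.2 ⟨e - d i, by simpa using hne, Nat.add_sub_of_le hde⟩)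
    · rfl

variable {𝒜}

theorem shiftedComponent_smul {d : ι → ℕ} {D : ℕ} {v : ι → A}
    (hv : shiftedComponent 𝒜 d D v = v) (e : ℕ) (a : A) :
    shiftedComponent 𝒜 d e (a • v) =
      (if D ≤ e then (DirectSum.decompose 𝒜 a (e - D) : A) else 0) • v := by
  ext i
  have hvi := congrFun hv i
  rw [shiftedComponent_apply] at hvi
  rw [shiftedComponent_apply, Pi.smul_apply, Pi.smul_apply, smul_eq_mul, smul_eq_mul]
  by_cases hdD : d i ≤ D
  · rw [if_pos hdD] at hvi
    have v_mem : v i ∈ 𝒜 (D - d i) := hvi ▸ SetLike.coe_mem _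
    rw [DirectSum.coe_decompose_mul_of_right_mem 𝒜 _ v_mem]
    by_cases hDe : D ≤ e
    · rw [if_pos hDe, if_pos (by omega), if_pos (by omega),
        show e - d i - (D - d i) = e - D by omega]
    · rw [if_neg hDe, zero_mul, ite_eq_right_iff]
      exact fun _ => if_neg (by omega)
  · rw [if_neg hdD] at hvi
    simp [← hvi]

theorem shiftedComponent_linearCombination {κ : Type*} [Fintype κ] {d : ι → ℕ} {D : κ → ℕ}
    {v : κ → ι → A} (hv : ∀ k, shiftedComponent 𝒜 d (D k) (v k) = v k) (e : ℕ) (a : κ → A) :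
    shiftedComponent 𝒜 d e (Fintype.linearCombination A v a) =
      Fintype.linearCombination A v (shiftedComponent 𝒜 D e a) := by
  simp only [Fintype.linearCombination_apply, map_sum, shiftedComponent_smul (hv _),
    shiftedComponent_apply]

theorem IsShiftedHomogeneous.ker_linearCombination {κ : Type*} [Fintype κ] {d : ι → ℕ} {D : κ → ℕ}
    {v : κ → ι → A} (hv : ∀ k, shiftedComponent 𝒜 d (D k) (v k) = v k) :
    IsShiftedHomogeneous 𝒜 D (LinearMap.ker (Fintype.linearCombination A v)) := by
  intro a ha e
  rw [LinearMap.mem_ker] at ha ⊢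
  rw [← shiftedComponent_linearCombination hv, ha, map_zero]

theorem IsShiftedHomogeneous.span_eq [Finite ι] {d : ι → ℕ} {N : Submodule A (ι → A)}
    (hN : IsShiftedHomogeneous 𝒜 d N) :
    Submodule.span A {v | v ∈ N ∧ ∃ D, shiftedComponent 𝒜 d D v = v} = N := by
  refine le_antisymm (Submodule.span_le.2 fun v hv => hv.1) fun v hv => ?_
  obtain ⟨s, hs⟩ := exists_sum_shiftedComponent_eq 𝒜 d v
  rw [← hs]
  exact Submodule.sum_mem _ fun e _ =>
    Submodule.subset_span ⟨hN v hv e, e, shiftedComponent_shiftedComponent 𝒜 d e v⟩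

theorem ker_linearCombination_le_irrelevant_smul_top (h𝒜 : ∀ a ∈ 𝒜 0, a ≠ 0 → IsUnit a)
    {c : ℕ} {d : ι → ℕ} {D : Fin c → ℕ} {v : Fin c → ι → A}
    (hv : ∀ k, shiftedComponent 𝒜 d (D k) (v k) = v k)
    (irredundant : ∀ k, v k ∉ Submodule.span A (v '' {k}ᶜ)) :
    LinearMap.ker (Fintype.linearCombination A v) ≤ (𝒜₊).toIdeal • ⊤ := by
  intro a ha
  refine mem_pi_ideal_smul_top fun k => ?_
  by_contra hk
  let u : A := DirectSum.decompose 𝒜 (a k) 0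
  have u_isUnit : IsUnit u := h𝒜 u (SetLike.coe_mem _) hk
  have relation :
      u • v k + ∑ j ∈ Finset.univ.erase k, shiftedComponent 𝒜 D (D k) a j • v j = 0 := by
    have component_mem_ker := IsShiftedHomogeneous.ker_linearCombination hv a ha (D k)
    rwa [LinearMap.mem_ker, Fintype.linearCombination_apply,
      ← Finset.add_sum_erase _ _ (Finset.mem_univ k), shiftedComponent_apply, if_pos le_rfl,
      Nat.sub_self] at component_mem_ker
  refine irredundant k ((Submodule.smul_mem_iff_of_isUnit _ u_isUnit).1 ?_)
  rw [eq_neg_of_add_eq_zero_left relation]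
  exact neg_mem (Submodule.sum_mem _ fun j hj => Submodule.smul_mem _ _
    (Submodule.subset_span ⟨j, (Finset.mem_erase.1 hj).1, rfl⟩))

theorem IsShiftedHomogeneous.exists_minimal_presentation [IsNoetherianRing A] [Finite ι]
    (h𝒜 : ∀ a ∈ 𝒜 0, a ≠ 0 → IsUnit a) {d : ι → ℕ} {N : Submodule A (ι → A)}
    (hN : IsShiftedHomogeneous 𝒜 d N) :
    ∃ (c : ℕ) (φ : (Fin c → A) →ₗ[A] (ι → A)), LinearMap.range φ = N ∧
      LinearMap.ker φ ≤ (𝒜₊).toIdeal • ⊤ ∧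
      ∃ D, IsShiftedHomogeneous 𝒜 D (LinearMap.ker φ) := by
  obtain ⟨c, v, hvN, span_v, irredundant⟩ :=
    exists_irredundant_generators (hN.span_eq ▸ IsNoetherian.noetherian N)
  choose D hD using fun k => (hvN k).2
  exact ⟨c, Fintype.linearCombination A v,
    by rw [Fintype.range_linearCombination, span_v, hN.span_eq],
    ker_linearCombination_le_irrelevant_smul_top h𝒜 hD irredundant,
    D, IsShiftedHomogeneous.ker_linearCombination hD⟩

theorem exists_isMinimalFreeRes_quotient [IsNoetherianRing A]
    (h𝒜 : ∀ a ∈ 𝒜 0, a ≠ 0 → IsUnit a) {J : Ideal A} (hJ : J.IsHomogeneous 𝒜)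
    (hJm : J ≤ (𝒜₊).toIdeal) : ∃ β, IsMinimalFreeRes (𝒜₊).toIdeal (A ⧸ J) β := by
  let ε : (Fin 1 → A) →ₗ[A] A ⧸ J := J.mkQ ∘ₗ LinearMap.proj 0
  have mem_ker {v : Fin 1 → A} : v ∈ LinearMap.ker ε ↔ v 0 ∈ J := by
    rw [LinearMap.mem_ker]
    exact Submodule.Quotient.mk_eq_zero J
  refine IsMinimalFreeRes.exists_of_step
    (P := fun b N => N ≤ (𝒜₊).toIdeal • ⊤ ∧ ∃ d, IsShiftedHomogeneous 𝒜 d N)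
    (fun b N hN => hN.1) (fun b N ⟨_, d, hN⟩ => hN.exists_minimal_presentation h𝒜)
    (ε := ε) (J.mkQ_surjective.comp (LinearMap.proj_surjective 0)) ⟨fun v hv => ?_, 0, ?_⟩
  · refine mem_pi_ideal_smul_top fun i => ?_
    rw [Subsingleton.elim i 0]
    exact hJm (mem_ker.1 hv)
  · intro v hv e
    rw [mem_ker] at hv ⊢
    simpa [shiftedComponent_apply] using hJ e hv

end GradedResolution

section StandardGrading

variable {τ R : Type*} [CommRing R]

attribute [local instance] MvPolynomial.gradedAlgebra

theorem mem_irrelevant_homogeneousSubmodule_iff {f : MvPolynomial τ R} :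
    f ∈ (homogeneousSubmodule τ R)₊ ↔ constantCoeff f = 0 := by
  rw [HomogeneousIdeal.mem_irrelevant_iff, GradedRing.proj_apply]
  change (decomposition.decompose' f 0 : MvPolynomial τ R) = 0 ↔ _
  rw [decomposition.decompose'_apply, homogeneousComponent_zero, C_eq_zero, constantCoeff_eq]

theorem mem_irrelevant_of_isHomogeneous {f : MvPolynomial τ R} {d : ℕ} (hf : f.IsHomogeneous d)
    (hd : d ≠ 0) : f ∈ (homogeneousSubmodule τ R)₊ :=
  mem_irrelevant_homogeneousSubmodule_iff.2 (hf.coeff_eq_zero (by simpa using hd.symm))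

theorem span_range_X_eq_irrelevant :
    Ideal.span (Set.range X) = ((homogeneousSubmodule τ R)₊).toIdeal := by
  refine le_antisymm (Ideal.span_le.2 ?_) fun f hf => ?_
  · rintro _ ⟨i, rfl⟩
    exact mem_irrelevant_homogeneousSubmodule_iff.2 (constantCoeff_X _ i)
  · rw [← Set.image_univ, mem_ideal_span_X_image]
    intro m hm
    have m_ne_zero : m ≠ 0 := by
      rintro rfl
      exact mem_support_iff.1 hm (mem_irrelevant_homogeneousSubmodule_iff.1 hf)
    obtain ⟨i, hi⟩ := Finsupp.ne_iff.1 m_ne_zero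
    exact ⟨i, trivial, hi⟩

theorem isUnit_of_mem_homogeneousSubmodule_zero {K : Type*} [Field K] {f : MvPolynomial τ K}
    (hf : f ∈ homogeneousSubmodule τ K 0) (hf0 : f ≠ 0) : IsUnit f := by
  rw [mem_homogeneousSubmodule, ← totalDegree_zero_iff_isHomogeneous,
    totalDegree_eq_zero_iff_eq_C] at hf
  rw [hf] at hf0 ⊢
  exact (IsUnit.mk0 _ (C_ne_zero.1 hf0)).map C

theorem isHomogeneous_det {ι : Type*} [Fintype ι] [DecidableEq ι] {d : ℕ}
    {M : Matrix ι ι (MvPolynomial τ R)} (hM : ∀ i j, (M i j).IsHomogeneous d) :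
    M.det.IsHomogeneous (Fintype.card ι * d) := by
  rw [Matrix.det_apply]
  refine IsHomogeneous.sum _ _ _ fun s _ => ?_
  have prod_isHomogeneous : (∏ i, M (s i) i).IsHomogeneous (Fintype.card ι * d) := by
    simpa using IsHomogeneous.prod Finset.univ (fun i => M (s i) i) (fun _ => d) fun i _ => hM _ _
  rcases Int.units_eq_one_or (Equiv.Perm.sign s) with h | h <;> rw [h]
  · simpa using prod_isHomogeneous
  · simpa using prod_isHomogeneous.neg

end StandardGrading

section MonomialIdeals

variable {τ R : Type*} [CommRing R]

theorem mem_ideal_span_X_pow_image {e : τ → ℕ} {S : Set τ} {u : MvPolynomial τ R} :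
    u ∈ Ideal.span ((fun i => (X i : MvPolynomial τ R) ^ e i) '' S) ↔
      ∀ m ∈ u.support, ∃ i ∈ S, e i ≤ m i := by
  have image_eq : (fun i => (X i : MvPolynomial τ R) ^ e i) '' S =
      (fun s => monomial s (1 : R)) '' ((fun i => Finsupp.single i (e i)) '' S) := by
    simp only [Set.image_image, X_pow_eq_monomial]
  rw [image_eq, mem_ideal_span_monomial_image]
  simp only [Set.exists_mem_image, Finsupp.single_le_iff]

theorem add_single_mem_support_X_pow_mul {u : MvPolynomial τ R} {m : τ →₀ ℕ} (hm : m ∈ u.support)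
    (j : τ) (e : ℕ) : m + Finsupp.single j e ∈ (X j ^ e * u).support := by
  rwa [mem_support_iff, X_pow_eq_monomial, add_comm, coeff_monomial_mul, one_mul,
    ← mem_support_iff]

theorem isWeaklyRegular_map_X_pow (e : τ → ℕ) {l : List τ} (hl : l.Nodup) :
    IsWeaklyRegular (MvPolynomial τ R) (l.map fun i => (X i : MvPolynomial τ R) ^ e i) := by
  induction l using List.reverseRecOn with
  | nil => exact .nil _ _
  | append_singleton l j ih =>
    rw [← List.concat_eq_append, List.nodup_concat] at hl
    have ofList_eq : Ideal.ofList (l.map fun i => (X i : MvPolynomial τ R) ^ e i) =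
        Ideal.span ((fun i => (X i : MvPolynomial τ R) ^ e i) '' {i | i ∈ l}) := by
      simp only [Ideal.ofList, List.mem_map]; rfl
    rw [List.map_append, isWeaklyRegular_append_iff_quotient, ofList_eq, List.map_singleton,
      isWeaklyRegular_singleton_iff, isSMulRegular_quotient_iff_mem_of_smul_mem]
    refine ⟨ih hl.2, fun u hu => ?_⟩
    rw [mem_ideal_span_X_pow_image] at hu ⊢
    intro m hm
    obtain ⟨i, hi, hle⟩ := hu _ (add_single_mem_support_X_pow_mul hm j (e j))
    have hji : j ≠ i := fun h => hl.1 (h ▸ hi)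
    exact ⟨i, hi, by simpa [Finsupp.single_apply, hji] using hle⟩

variable [Fintype τ]

theorem mem_ideal_span_X_sq_sup_prod_X {u : MvPolynomial τ R} :
    u ∈ Ideal.span (Set.range fun i => (X i : MvPolynomial τ R) ^ 2) ⊔ Ideal.span {∏ i, X i} ↔
      ∀ m ∈ u.support, (∃ i, 2 ≤ m i) ∨ ∀ i, 1 ≤ m i := by
  have span_eq : Ideal.span (Set.range fun i => (X i : MvPolynomial τ R) ^ 2) ⊔
      Ideal.span {∏ i, X i} = Ideal.span ((fun s => monomial s (1 : R)) ''
        (insert (∑ i, Finsupp.single i 1) (Set.range fun i => Finsupp.single i 2))) := by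
    rw [Set.image_insert_eq, ← Set.range_comp, Ideal.span_insert, sup_comm, monomial_sum_one]
    simp only [X_pow_eq_monomial]
    rfl
  rw [span_eq, mem_ideal_span_monomial_image]
  refine forall₂_congr fun m _ => ?_
  have sum_single_le : ∑ i, Finsupp.single i 1 ≤ m ↔ ∀ i, 1 ≤ m i := by
    classical
    simp [Finsupp.le_def, Finsupp.finsetSum_apply, Finsupp.single_apply]
  simp only [Set.mem_insert_iff, exists_eq_or_imp, Set.exists_range_iff, Finsupp.single_le_iff,
    sum_single_le]
  exact or_comm

theorem mem_ideal_span_X_sq_sup_prod_X_of_X_mul_mem {u : MvPolynomial τ R}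
    (h : ∀ j, X j * u ∈ Ideal.span (Set.range fun i => (X i : MvPolynomial τ R) ^ 2)) :
    u ∈ Ideal.span (Set.range fun i => (X i : MvPolynomial τ R) ^ 2) ⊔
      Ideal.span {∏ i, X i} := by
  rw [mem_ideal_span_X_sq_sup_prod_X]
  intro m hm
  by_contra! hcon
  obtain ⟨m_lt_two, j, hj⟩ := hcon
  have hju := h j
  rw [← Set.image_univ, mem_ideal_span_X_pow_image (e := fun _ => 2)] at hju
  obtain ⟨i, -, hi⟩ := hju _ (pow_one (X j : MvPolynomial τ R) ▸
    add_single_mem_support_X_pow_mul hm j 1)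
  have := m_lt_two i
  rcases eq_or_ne j i with rfl | hji
  · simp at hi; omega
  · simp [hji] at hi; omega

theorem prod_X_erase_notMem [Nontrivial R] [DecidableEq τ] (a : τ) :
    (∏ i ∈ Finset.univ.erase a, X i : MvPolynomial τ R) ∉
      Ideal.span (Set.range fun i => (X i : MvPolynomial τ R) ^ 2) ⊔
        Ideal.span {∏ i, X i} := by
  have prod_eq : (∏ i ∈ Finset.univ.erase a, X i : MvPolynomial τ R) =
      monomial (∑ i ∈ Finset.univ.erase a, Finsupp.single i 1) 1 := (monomial_sum_one _ _).symm
  have exponent (i : τ) : (∑ i ∈ Finset.univ.erase a, Finsupp.single i 1 : τ →₀ ℕ) i =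
      if i ≠ a then 1 else 0 := by
    simp [Finsupp.finsetSum_apply, Finsupp.single_apply]
  classical
  rw [mem_ideal_span_X_sq_sup_prod_X, prod_eq, support_monomial, if_neg one_ne_zero]
  intro h
  rcases h _ (Finset.mem_singleton_self _) with ⟨i, hi⟩ | hpos
  · rw [exponent] at hi
    split_ifs at hi <;> omega
  · simpa [exponent] using hpos a

end MonomialIdeals

theorem isWeaklyRegular_quotient_congr {R : Type*} [CommRing R] {I : Ideal R} {rs ts : List R}
    (h : List.Forall₂ (fun r t => r - t ∈ I) rs ts) :
    IsWeaklyRegular (R ⧸ I) rs ↔ IsWeaklyRegular (R ⧸ I) ts := by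
  refine AddEquiv.isWeaklyRegular_congr (e := AddEquiv.refl _) (h.imp fun r t hrt z => ?_)
  obtain ⟨z, rfl⟩ := I.mkQ_surjective z
  exact (Submodule.Quotient.eq I).2 (by simpa [← sub_mul] using I.mul_mem_right z hrt)

theorem isWeaklyRegular_map_ringEquiv_iff {R S : Type*} [CommRing R] [CommRing S] (e : R ≃+* S)
    {rs : List R} : IsWeaklyRegular S (rs.map e) ↔ IsWeaklyRegular R rs :=
  (AddEquiv.isWeaklyRegular_congr (e := e.toAddEquiv)
    (List.forall₂_map_right_iff.2 (List.forall₂_same.2 fun r _ => map_mul e r))).symm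

theorem ofList_ofFn {R : Type*} [CommRing R] {k : ℕ} (f : Fin k → R) :
    Ideal.ofList (List.ofFn f) = Ideal.span (Set.range f) := by
  simp only [Ideal.ofList, List.mem_ofFn, Set.range]

theorem det_sub_det_mem {ι R : Type*} [Fintype ι] [DecidableEq ι] [CommRing R] {I : Ideal R}
    {M N : Matrix ι ι R} (h : ∀ i j, M i j - N i j ∈ I) : M.det - N.det ∈ I := by
  rw [← Ideal.Quotient.eq, RingHom.map_det, RingHom.map_det]
  congr 1
  ext i j
  exact Ideal.Quotient.eq.2 (h i j)

theorem det_mul_mem_span_range_mulVec {ι R : Type*} [Fintype ι] [DecidableEq ι] [CommRing R]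
    (M : Matrix ι ι R) (v : ι → R) (j : ι) :
    M.det * v j ∈ Ideal.span (Set.range (M *ᵥ v)) := by
  have cramer : M.adjugate *ᵥ (M *ᵥ v) = M.det • v := by
    rw [Matrix.mulVec_mulVec, Matrix.adjugate_mul, Matrix.smul_mulVec, Matrix.one_mulVec]
  have hj : M.det * v j = ∑ i, M.adjugate j i * (M *ᵥ v) i := (congrFun cramer j).symm
  rw [hj]
  exact Ideal.sum_mem _ fun i _ => Ideal.mul_mem_left _ _ (Ideal.subset_span ⟨i, rfl⟩)

theorem algHom_sub_mem_of_X {τ K S : Type*} [CommRing K] [CommRing S] [Algebra K S] {I : Ideal S}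
    {φ ψ : MvPolynomial τ K →ₐ[K] S} (h : ∀ i, φ (X i) - ψ (X i) ∈ I) (f : MvPolynomial τ K) :
    φ f - ψ f ∈ I := by
  have comp_eq : (Ideal.Quotient.mkₐ K I).comp φ = (Ideal.Quotient.mkₐ K I).comp ψ :=
    MvPolynomial.algHom_ext fun i => Ideal.Quotient.eq.2 (h i)
  exact Ideal.Quotient.eq.1 (DFunLike.congr_fun comp_eq f)

/-- The change of coordinates `X i ↦ X i - q i`, for offsets `q` fixed by it and its inverse. -/
noncomputable def shear {τ K : Type*} [CommRing K] (q : τ → MvPolynomial τ K)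
    (h_sub : ∀ i, aeval (fun j => X j - q j) (q i) = q i)
    (h_add : ∀ i, aeval (fun j => X j + q j) (q i) = q i) :
    MvPolynomial τ K ≃ₐ[K] MvPolynomial τ K :=
  AlgEquiv.ofAlgHom (aeval fun j => X j - q j) (aeval fun j => X j + q j)
    (MvPolynomial.algHom_ext fun i => by
      rw [AlgHom.comp_apply, aeval_X, map_add, aeval_X, h_sub, sub_add_cancel, AlgHom.id_apply])
    (MvPolynomial.algHom_ext fun i => by
      rw [AlgHom.comp_apply, aeval_X, map_sub, aeval_X, h_add, add_sub_cancel_right,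
        AlgHom.id_apply])

namespace RhatJ

/-- The polynomial ring `R̂`, with `Sum.inl (i, j)` indexing `x_{ij}` and `Sum.inr j` indexing
`y_j`. -/
abbrev Rhat (n : ℕ) (K : Type*) [CommRing K] := MvPolynomial ((Fin (n + 1) × Fin n) ⊕ Fin n) K

variable {n : ℕ} {K : Type*} [CommRing K]

/-- The generic matrix `X̂`. -/
noncomputable def genericMatrix : Matrix (Fin (n + 1)) (Fin n) (Rhat n K) :=
  .of fun i j => X (Sum.inl (i, j))

/-- The generic column `Y`. -/
noncomputable def y (j : Fin n) : Rhat n K := X (Sum.inr j)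

/-- The generators `g i` of the ideal `J = I₁(X̂Y)`, with rows counted from `0`. -/
noncomputable def generator : Fin (n + 1) → Rhat n K := genericMatrix *ᵥ y

variable (n K) in
/-- The ideal generated by all `g i` except `g 0`. -/
noncomputable def lowerIdeal : Ideal (Rhat n K) :=
  Ideal.span (Set.range fun i : Fin n => generator i.succ)

variable (n K) in
/-- The maximal minor of `X̂` avoiding row `0`. -/
noncomputable def lowerMinor : Rhat n K := (genericMatrix.submatrix Fin.succ id).det

/-- Specialization to the matrix with lower square block `diag(X 0, …, X (n - 1))` and row `0`
equal to zero, and to the column `X`. -/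
noncomputable def reduction : Rhat n K →ₐ[K] MvPolynomial (Fin n) K :=
  aeval (Sum.elim (fun a => if a.1 = a.2.succ then X a.2 else 0) X)

theorem reduction_y (j : Fin n) : reduction (y j : Rhat n K) = X j := by
  rw [reduction, y, aeval_X, Sum.elim_inr]

theorem reduction_genericMatrix (i : Fin (n + 1)) (j : Fin n) :
    reduction (genericMatrix i j : Rhat n K) = if i = j.succ then X j else 0 := by
  rw [reduction, genericMatrix, of_apply, aeval_X, Sum.elim_inl]

theorem reduction_generator_succ (i : Fin n) :
    reduction (generator i.succ : Rhat n K) = X i ^ 2 := by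
  simp [generator, mulVec, dotProduct, reduction_y, reduction_genericMatrix, sq]

theorem reduction_surjective :
    Function.Surjective (reduction : Rhat n K → MvPolynomial (Fin n) K) := fun f =>
  ⟨rename Sum.inr f, by rw [reduction, aeval_rename, Sum.elim_comp_inr, aeval_X_left_apply]⟩

theorem map_reduction_lowerIdeal :
    (lowerIdeal n K).map reduction = Ideal.span (Set.range fun i => X i ^ 2) := by
  rw [lowerIdeal, Ideal.map_span, ← Set.range_comp]
  exact congrArg (Ideal.span ∘ Set.range) (funext reduction_generator_succ)

theorem y_mul_lowerMinor_mem (j : Fin n) : y j * lowerMinor n K ∈ lowerIdeal n K := by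
  rw [mul_comm]
  exact det_mul_mem_span_range_mulVec (genericMatrix.submatrix Fin.succ id) y j

theorem span_range_generator :
    Ideal.span (Set.range (generator : Fin (n + 1) → Rhat n K)) =
      lowerIdeal n K ⊔ Ideal.span {generator 0} := by
  rw [← Fin.cons_self_tail (generator : Fin (n + 1) → Rhat n K), Fin.range_cons, Ideal.span_insert,
    sup_comm]
  rfl

section Homogeneity

attribute [local instance] MvPolynomial.gradedAlgebra

theorem isHomogeneous_generator (i : Fin (n + 1)) :
    (generator i : Rhat n K).IsHomogeneous 2 :=
  IsHomogeneous.sum _ _ _ fun _ _ => (isHomogeneous_X K _).mul (isHomogeneous_X K _)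

theorem isHomogeneous_lowerIdeal :
    (lowerIdeal n K).IsHomogeneous (homogeneousSubmodule _ K) := by
  refine Ideal.homogeneous_span _ _ ?_
  rintro _ ⟨i, rfl⟩
  exact ⟨2, isHomogeneous_generator _⟩

theorem isHomogeneous_lowerIdeal_sup_lowerMinor :
    (lowerIdeal n K ⊔ Ideal.span {lowerMinor n K}).IsHomogeneous (homogeneousSubmodule _ K) := by
  refine isHomogeneous_lowerIdeal.sup (Ideal.homogeneous_span _ _ ?_)
  rintro _ rfl
  exact ⟨_, isHomogeneous_det fun i j => isHomogeneous_X K _⟩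

end Homogeneity

theorem natCast_le_ringKrullDim_quotient [Nontrivial K] :
    ((n ^ 2 + n : ℕ) : WithBot ℕ∞) ≤
      ringKrullDim (Rhat n K ⧸ Ideal.span (Set.range (generator : Fin (n + 1) → Rhat n K))) := by
  let φ : Rhat n K →ₐ[K] MvPolynomial (Fin (n + 1) × Fin n) K := aeval (Sum.elim X 0)
  have surj_φ : Function.Surjective φ := fun f =>
    ⟨rename Sum.inl f, by rw [aeval_rename, Sum.elim_comp_inl, aeval_X_left_apply]⟩
  have le_ker : Ideal.span (Set.range generator) ≤ RingHom.ker φ := by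
    rw [Ideal.span_le]
    rintro _ ⟨i, rfl⟩
    simp [generator, mulVec, dotProduct, y, φ]
  calc ((n ^ 2 + n : ℕ) : WithBot ℕ∞)
      ≤ ringKrullDim K + Nat.card (Fin (n + 1) × Fin n) := by
        rw [Nat.card_eq_fintype_card, Fintype.card_prod, Fintype.card_fin, Fintype.card_fin,
          add_one_mul, ← sq]
        exact le_add_of_nonneg_left ringKrullDim_nonneg_of_nontrivial
    _ ≤ ringKrullDim (MvPolynomial (Fin (n + 1) × Fin n) K) :=
        ringKrullDim_add_natCard_le_ringKrullDim_mvPolynomial _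
    _ ≤ _ := ringKrullDim_le_of_surjective (Ideal.Quotient.lift _ (φ : Rhat n K →+* _) le_ker)
        (Ideal.Quotient.lift_surjective_of_surjective _ _ surj_φ)

variable [NeZero n]

/-- The corner variable `x_{00}`. -/
noncomputable def corner : Rhat n K := genericMatrix 0 0

/-- The matrix with `x_{00}` along the diagonal of `X̂` and `y` along its subdiagonal. -/
noncomputable def bidiagonal : Matrix (Fin (n + 1)) (Fin n) (Rhat n K) :=
  .of fun i j => if i = j.castSucc then corner else if i = j.succ then y j else 0

/-- The entries of `X̂ - bidiagonal`. -/
noncomputable def linearForm (a : Fin (n + 1) × Fin n) : Rhat n K :=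
  genericMatrix a.1 a.2 - bidiagonal a.1 a.2

variable (n K) in
/-- The linear forms which cut `X̂` down to `bidiagonal`; they turn out to be a maximal regular
sequence on `R̂ ⧸ J`. The corner entry of `X̂ - bidiagonal` is zero and hence left out. -/
noncomputable def linearForms : List (Rhat n K) :=
  (Finset.univ.erase (0, 0)).toList.map linearForm

theorem length_linearForms : (linearForms n K).length = n ^ 2 + n - 1 := by
  rw [linearForms, List.length_map, Finset.length_toList, Finset.card_erase_of_mem
    (Finset.mem_univ _), Finset.card_univ, Fintype.card_prod, Fintype.card_fin, Fintype.card_fin,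
    add_one_mul, ← sq]

theorem bidiagonal_succ (j : Fin n) : (bidiagonal j.succ j : Rhat n K) = y j := by
  rw [bidiagonal, of_apply, if_neg (Fin.castSucc_lt_succ).ne', if_pos rfl]

theorem bidiagonal_zero_zero : (bidiagonal 0 0 : Rhat n K) = corner := by
  rw [bidiagonal, of_apply, if_pos Fin.castSucc_zero'.symm]

theorem bidiagonal_mulVec_zero : (bidiagonal *ᵥ y : Fin (n + 1) → Rhat n K) 0 = corner * y 0 := by
  rw [mulVec, dotProduct, Finset.sum_eq_single 0, bidiagonal_zero_zero]
  · intro j _ hj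
    rw [bidiagonal, of_apply, if_neg (fun h => hj ?_), if_neg (Fin.succ_ne_zero j).symm, zero_mul]
    exact Fin.castSucc_eq_zero_iff.1 h.symm
  · exact fun h => absurd (Finset.mem_univ _) h

theorem bidiagonal_mulVec_succ (k : Fin n) :
    (bidiagonal *ᵥ y : Fin (n + 1) → Rhat n K) k.succ =
      y k ^ 2 + corner * ∑ j with j.castSucc = k.succ, y j := by
  have entry (j : Fin n) : (bidiagonal k.succ j * y j : Rhat n K) =
      (if j = k then y k ^ 2 else 0) + if j.castSucc = k.succ then corner * y j else 0 := by
    rcases eq_or_ne j k with rfl | hjk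
    · rw [bidiagonal_succ, if_pos rfl, if_neg (Fin.castSucc_lt_succ).ne, add_zero, sq]
    · rw [bidiagonal, of_apply, if_neg hjk, zero_add, if_neg (fun h => hjk (Fin.succ_inj.1 h).symm),
        ite_mul, zero_mul]
      simp only [eq_comm]
  rw [mulVec, dotProduct, Finset.sum_congr rfl fun j _ => entry j, Finset.sum_add_distrib,
    Finset.sum_ite_eq' _ _ _, if_pos (Finset.mem_univ k), Finset.mul_sum, Finset.sum_filter]

theorem linearForm_zero_zero : (linearForm (0, 0) : Rhat n K) = 0 := by
  rw [linearForm, bidiagonal_zero_zero, corner, sub_self]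

theorem genericMatrix_sub_bidiagonal_mem (i : Fin (n + 1)) (j : Fin n) :
    genericMatrix i j - bidiagonal i j ∈ Ideal.ofList (linearForms n K) := by
  change linearForm (i, j) ∈ _
  rcases eq_or_ne (i, j) (0, 0) with h | h
  · rw [h, linearForm_zero_zero]
    exact Ideal.zero_mem _
  · exact Ideal.subset_span (List.mem_map_of_mem (f := linearForm)
      (Finset.mem_toList.2 (Finset.mem_erase.2 ⟨h, Finset.mem_univ _⟩)))

theorem generator_sub_bidiagonal_mulVec_mem (i : Fin (n + 1)) :
    generator i - (bidiagonal *ᵥ y) i ∈ Ideal.ofList (linearForms n K) := by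
  rw [generator, ← Pi.sub_apply, ← sub_mulVec, mulVec, dotProduct]
  exact sum_mem fun j _ =>
    (Ideal.ofList (linearForms n K)).mul_mem_right _ (genericMatrix_sub_bidiagonal_mem i j)

theorem map_bidiagonal {φ : Rhat n K →ₐ[K] Rhat n K} (h_corner : φ corner = corner)
    (h_y : ∀ j, φ (y j) = y j) (i : Fin (n + 1)) (j : Fin n) :
    φ (bidiagonal i j) = bidiagonal i j := by
  simp only [bidiagonal, of_apply, apply_ite φ, h_corner, h_y, map_zero]

theorem isWeaklyRegular_linearForms_append_corner_cons_y_pow (k : ℕ) :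
    IsWeaklyRegular (Rhat n K) (linearForms n K ++ corner :: List.ofFn fun j => y j ^ k) := by
  let q : (Fin (n + 1) × Fin n) ⊕ Fin n → Rhat n K :=
    Sum.elim (fun a => if a = (0, 0) then 0 else bidiagonal a.1 a.2) 0
  have fixes_q {φ : Rhat n K →ₐ[K] Rhat n K} (h_corner : φ corner = corner)
      (h_y : ∀ j, φ (y j) = y j) : ∀ i, φ (q i) = q i
    | .inl a => by
      simp only [q, Sum.elim_inl, apply_ite φ, map_zero, map_bidiagonal h_corner h_y]
    | .inr _ => map_zero φ
  let e : Rhat n K ≃ₐ[K] Rhat n K := shear q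
    (fixes_q (by simp [corner, genericMatrix, q]) (by simp [y, q]))
    (fixes_q (by simp [corner, genericMatrix, q]) (by simp [y, q]))
  have e_X (i) : e (X i) = X i - q i := aeval_X _ i
  let vars : List ((Fin (n + 1) × Fin n) ⊕ Fin n) :=
    (Finset.univ.erase (0, 0)).toList.map .inl ++ .inl (0, 0) :: (List.finRange n).map .inr
  have nodup_vars : vars.Nodup := by
    refine List.Nodup.append ((Finset.nodup_toList _).map Sum.inl_injective)
      (List.nodup_cons.2 ⟨by simp, (List.nodup_finRange n).map Sum.inr_injective⟩)
      (List.disjoint_left.2 fun i hi => ?_)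
    obtain ⟨a, ha, rfl⟩ := List.mem_map.1 hi
    simpa using ha
  have map_vars :
      (vars.map fun i => (X i : Rhat n K) ^ Sum.elim (fun _ => 1) (fun _ => k) i).map e =
        linearForms n K ++ corner :: List.ofFn fun j => y j ^ k := by
    simp only [vars, List.map_append, List.map_cons, List.map_map, linearForms, List.ofFn_eq_map]
    congr 1
    · refine List.map_congr_left fun a ha => ?_
      have ha0 : a ≠ (0, 0) := (Finset.mem_erase.1 (Finset.mem_toList.1 ha)).1
      simp [e_X, q, ha0, linearForm, genericMatrix]
    · simp [e_X, q, corner, genericMatrix, y, Function.comp_def]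
  rw [← map_vars]
  exact (isWeaklyRegular_map_ringEquiv_iff e.toRingEquiv).2
    (isWeaklyRegular_map_X_pow _ nodup_vars)

theorem bidiagonal_mem {I : Ideal (Rhat n K)} (h_corner : corner ∈ I) (h_y : ∀ j, y j ∈ I)
    (i : Fin (n + 1)) (j : Fin n) : bidiagonal i j ∈ I := by
  rw [bidiagonal, of_apply]
  split_ifs
  exacts [h_corner, h_y j, I.zero_mem]

theorem span_range_X_le {I : Ideal (Rhat n K)} (h_linear : Ideal.ofList (linearForms n K) ≤ I)
    (h_corner : corner ∈ I) (h_y : ∀ j, y j ∈ I) : Ideal.span (Set.range X) ≤ I := by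
  refine Ideal.span_le.2 ?_
  rintro _ ⟨a | j, rfl⟩
  · exact (I.sub_mem_iff_left (bidiagonal_mem h_corner h_y a.1 a.2)).1
      (h_linear (genericMatrix_sub_bidiagonal_mem a.1 a.2))
  · exact h_y j

theorem ofList_linearForms_append_corner_cons_y :
    Ideal.ofList (linearForms n K ++ corner :: List.ofFn y) = Ideal.span (Set.range X) := by
  have X_mem (i) : (X i : Rhat n K) ∈ Ideal.span (Set.range X) := Ideal.subset_span ⟨i, rfl⟩
  rw [Ideal.ofList_append, Ideal.ofList_cons, ofList_ofFn]
  refine le_antisymm (sup_le ?_ (sup_le ?_ ?_)) (span_range_X_le le_sup_left ?_ fun j => ?_)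
  · refine Ideal.span_le.2 fun θ hθ => ?_
    obtain ⟨a, -, rfl⟩ := List.mem_map.1 hθ
    exact sub_mem (X_mem _) (bidiagonal_mem (X_mem _) (fun j => X_mem _) _ _)
  · exact (Ideal.span_singleton_le_iff_mem _).2 (X_mem _)
  · exact Ideal.span_le.2 (Set.range_subset_iff.2 fun j => X_mem _)
  · exact Ideal.mem_sup_right (Ideal.mem_sup_left (Ideal.mem_span_singleton_self _))
  · exact Ideal.mem_sup_right (Ideal.mem_sup_right (Ideal.subset_span ⟨j, rfl⟩))

theorem isHomogeneous_linearForms {θ : Rhat n K} (hθ : θ ∈ linearForms n K) :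
    θ.IsHomogeneous 1 := by
  obtain ⟨a, -, rfl⟩ := List.mem_map.1 hθ
  refine (isHomogeneous_X K _).sub ?_
  rw [bidiagonal, of_apply]
  split_ifs
  exacts [isHomogeneous_X K _, isHomogeneous_X K _, isHomogeneous_zero _ _ _]

theorem reduction_corner : reduction (corner : Rhat n K) = 0 := by
  rw [corner, reduction_genericMatrix, if_neg (Fin.succ_ne_zero 0).symm]

theorem reduction_bidiagonal (i : Fin (n + 1)) (j : Fin n) :
    reduction (bidiagonal i j : Rhat n K) = if i = j.succ then X j else 0 := by
  rw [bidiagonal, of_apply, apply_ite reduction, apply_ite reduction, reduction_corner,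
    reduction_y, map_zero]
  split_ifs with h_diag h_sub
  · exact absurd (h_diag.symm.trans h_sub) (Fin.castSucc_lt_succ).ne
  all_goals rfl

theorem bidiagonal_sub_mem_span_corner (i : Fin (n + 1)) (j : Fin n) :
    bidiagonal i j - (if i = j.succ then y j else 0) ∈ Ideal.span {(corner : Rhat n K)} := by
  rw [bidiagonal, of_apply]
  split_ifs with h_diag h_sub
  · exact absurd (h_diag.symm.trans h_sub) (Fin.castSucc_lt_succ).ne
  · rw [sub_zero]
    exact Ideal.mem_span_singleton_self _
  all_goals
    rw [sub_self]
    exact Ideal.zero_mem _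

theorem sub_rename_reduction_mem (f : Rhat n K) :
    f - rename Sum.inr (reduction f) ∈ Ideal.ofList (linearForms n K) ⊔ Ideal.span {corner} := by
  refine algHom_sub_mem_of_X (φ := .id K _) (ψ := (rename Sum.inr).comp reduction) ?_ f
  rintro (⟨i, j⟩ | j)
  · have decomposition := add_mem
      (Ideal.mem_sup_left (genericMatrix_sub_bidiagonal_mem (K := K) i j))
      (Ideal.mem_sup_right (bidiagonal_sub_mem_span_corner i j))
    rw [sub_add_sub_cancel] at decomposition
    simpa [reduction, genericMatrix, y, apply_ite (rename Sum.inr)] using decomposition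
  · simp [reduction]

theorem ker_reduction :
    RingHom.ker (reduction : Rhat n K →ₐ[K] MvPolynomial (Fin n) K) =
      Ideal.ofList (linearForms n K) ⊔ Ideal.span {corner} := by
  refine le_antisymm (fun f hf => ?_) (sup_le (Ideal.span_le.2 fun θ hθ => ?_) ?_)
  · simpa [RingHom.mem_ker.1 hf] using sub_rename_reduction_mem f
  · obtain ⟨a, -, rfl⟩ := List.mem_map.1 hθ
    exact (map_sub _ _ _).trans
      (sub_eq_zero.2 ((reduction_genericMatrix _ _).trans (reduction_bidiagonal _ _).symm))
  · exact (Ideal.span_singleton_le_iff_mem _).2 reduction_corner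

theorem mem_sup_iff_reduction_mem_map {I : Ideal (Rhat n K)} {f : Rhat n K} :
    f ∈ I ⊔ Ideal.ofList (linearForms n K) ⊔ Ideal.span {corner} ↔
      reduction f ∈ I.map reduction := by
  rw [sup_assoc, ← ker_reduction, ← Ideal.mem_comap]
  exact Eq.to_iff (congrArg (f ∈ ·) (Ideal.comap_map_of_surjective' _ reduction_surjective I).symm)

theorem det_submatrix_succ_bidiagonal :
    (bidiagonal.submatrix Fin.succ id : Matrix (Fin n) (Fin n) (Rhat n K)).det = ∏ j, y j := by
  rw [det_of_isUpperTriangular]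
  · exact Finset.prod_congr rfl fun j _ => bidiagonal_succ j
  · intro i j hij
    rw [submatrix_apply, id_eq, bidiagonal, of_apply, if_neg, if_neg]
    · exact fun h => hij.ne' (Fin.succ_inj.1 h)
    · exact fun h => (Fin.castSucc_lt_succ.trans (Fin.succ_lt_succ_iff.2 hij)).ne' h

theorem lowerMinor_sub_prod_y_mem :
    lowerMinor n K - ∏ j, y j ∈ Ideal.ofList (linearForms n K) :=
  det_submatrix_succ_bidiagonal (n := n) (K := K) ▸
    det_sub_det_mem fun i j => genericMatrix_sub_bidiagonal_mem i.succ j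

theorem reduction_lowerMinor : reduction (lowerMinor n K) = ∏ j, X j := by
  have sub_mem_ker : lowerMinor n K - ∏ j, y j ∈ RingHom.ker reduction :=
    ker_reduction (n := n) (K := K) ▸ Ideal.mem_sup_left lowerMinor_sub_prod_y_mem
  rw [RingHom.mem_ker, map_sub, sub_eq_zero, map_prod] at sub_mem_ker
  exact sub_mem_ker.trans (Finset.prod_congr rfl fun j _ => reduction_y j)

theorem map_reduction_lowerIdeal_sup_lowerMinor :
    (lowerIdeal n K ⊔ Ideal.span {lowerMinor n K}).map reduction =
      Ideal.span (Set.range fun i => X i ^ 2) ⊔ Ideal.span {∏ i, X i} := by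
  rw [Ideal.map_sup, map_reduction_lowerIdeal, Ideal.map_span, Set.image_singleton,
    reduction_lowerMinor]

section Reduction

attribute [local instance] MvPolynomial.gradedAlgebra

theorem isWeaklyRegular_generators_append_linearForms_append_corner :
    IsWeaklyRegular (Rhat n K)
      (List.ofFn (fun i : Fin n => generator i.succ) ++ (linearForms n K ++ [corner])) := by
  have regular := isWeaklyRegular_linearForms_append_corner_cons_y_pow (n := n) (K := K) 2
  rw [List.append_cons, isWeaklyRegular_append_iff_quotient] at regular
  have sub_mem (j : Fin n) :
      y j ^ 2 - generator j.succ ∈ Ideal.ofList (linearForms n K ++ [corner]) := by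
    rw [Ideal.ofList_append, Ideal.ofList_singleton, ← ker_reduction, RingHom.mem_ker, map_sub,
      map_pow, reduction_y, reduction_generator_succ, sub_self]
  have forall₂_generators : List.Forall₂
      (fun r t => r - t ∈ Ideal.ofList (linearForms n K ++ [corner]))
      (List.ofFn fun j => y j ^ 2) (List.ofFn fun j => generator j.succ) := by
    rw [List.ofFn_eq_map, List.ofFn_eq_map, List.forall₂_map_left_iff, List.forall₂_map_right_iff,
      List.forall₂_same]
    exact fun j _ => sub_mem j
  rw [isWeaklyRegular_quotient_congr forall₂_generators,
    ← isWeaklyRegular_append_iff_quotient] at regular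
  have hom (r : Rhat n K)
      (hr : r ∈ linearForms n K ++ [corner] ++ List.ofFn fun j : Fin n => generator j.succ) :
      ∃ d ≠ 0, r.IsHomogeneous d := by
    rw [List.mem_append, List.mem_append, List.mem_singleton, List.mem_ofFn] at hr
    rcases hr with (hr | rfl) | ⟨j, rfl⟩
    · exact ⟨1, one_ne_zero, isHomogeneous_linearForms hr⟩
    · exact ⟨1, one_ne_zero, isHomogeneous_X K _⟩
    · exact ⟨2, two_ne_zero, isHomogeneous_generator _⟩
  refine isWeaklyRegular_of_perm_of_isHomogeneousElem (𝒜 := homogeneousSubmodule _ K) regular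
    List.perm_append_comm (fun r hr => ?_) fun r hr => ?_
  · obtain ⟨d, -, hd⟩ := hom r hr
    exact ⟨d, hd⟩
  · obtain ⟨d, d_ne_zero, hd⟩ := hom r hr
    exact mem_irrelevant_of_isHomogeneous hd d_ne_zero

theorem isWeaklyRegular_linearForms_quotient_lowerIdeal :
    IsWeaklyRegular (Rhat n K ⧸ lowerIdeal n K) (linearForms n K) := by
  have regular := isWeaklyRegular_generators_append_linearForms_append_corner (n := n) (K := K)
  rw [← List.append_assoc, isWeaklyRegular_append_iff_quotient,
    isWeaklyRegular_append_iff_quotient, ofList_ofFn] at regular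
  exact regular.1.2

theorem mem_of_corner_mul_mem {f : Rhat n K}
    (h : corner * f ∈ lowerIdeal n K ⊔ Ideal.ofList (linearForms n K)) :
    f ∈ lowerIdeal n K ⊔ Ideal.ofList (linearForms n K) := by
  have regular := isWeaklyRegular_generators_append_linearForms_append_corner (n := n) (K := K)
  rw [← List.append_assoc, isWeaklyRegular_append_iff_quotient,
    isWeaklyRegular_cons_quotient_iff, Ideal.ofList_append, ofList_ofFn] at regular
  exact regular.2.1 f h

theorem y_mul_mem_of_y_zero_mul_mem {f : Rhat n K}
    (h : y 0 * f ∈ lowerIdeal n K ⊔ Ideal.ofList (linearForms n K)) (j : Fin n) :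
    y j * f ∈ lowerIdeal n K ⊔ Ideal.ofList (linearForms n K) := by
  obtain ⟨k, hk⟩ := j
  induction k with
  | zero => exact h
  | succ k ih =>
    let i : Fin n := ⟨k, k.lt_succ_self.trans hk⟩
    have generator_mem : generator i.succ ∈ lowerIdeal n K ⊔ Ideal.ofList (linearForms n K) :=
      Ideal.mem_sup_left (Ideal.subset_span ⟨i, rfl⟩)
    have row_mem := (Submodule.sub_mem_iff_right _ generator_mem).1
      (Ideal.mem_sup_right (generator_sub_bidiagonal_mulVec_mem i.succ))
    have row_eq : (bidiagonal *ᵥ y : Fin (n + 1) → Rhat n K) i.succ =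
        y i ^ 2 + corner * y ⟨k + 1, hk⟩ := by
      rw [bidiagonal_mulVec_succ,
        Finset.sum_eq_single_of_mem ⟨k + 1, hk⟩ (by simp [i, Fin.ext_iff])]
      intro j hj hne
      exact absurd (Fin.ext (by simpa [i, Fin.ext_iff] using hj)) hne
    refine mem_of_corner_mul_mem ?_
    have corner_mul_eq : corner * (y ⟨k + 1, hk⟩ * f) =
        f * (bidiagonal *ᵥ y) i.succ - y i * (y i * f) := by
      rw [row_eq]
      ring
    rw [corner_mul_eq]
    exact sub_mem (Ideal.mul_mem_left _ _ row_mem) (Ideal.mul_mem_left _ _ (ih _))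

theorem colon_range_y_le :
    (lowerIdeal n K ⊔ Ideal.ofList (linearForms n K)).colon (Set.range y) ≤
      lowerIdeal n K ⊔ Ideal.span {lowerMinor n K} ⊔ Ideal.ofList (linearForms n K) := by
  have isHausdorff := isHausdorff_irrelevant_quotient
    ((isHomogeneous_lowerIdeal_sup_lowerMinor (n := n) (K := K)).sup
      (isHomogeneous_ofList fun θ hθ => ⟨1, isHomogeneous_linearForms hθ⟩))
  refine colon_le_of_colon_sup_span_le (c := corner)
    (mem_irrelevant_of_isHomogeneous (isHomogeneous_X K _) one_ne_zero)
    (fun f => mem_of_corner_mul_mem) (sup_le (sup_le ?_ ?_) ?_) fun f hf => ?_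
  · exact le_sup_left.trans Ideal.le_colon
  · rw [Ideal.span_singleton_le_iff_mem, Submodule.mem_colon]
    rintro _ ⟨j, rfl⟩
    rw [smul_eq_mul, mul_comm]
    exact Ideal.mem_sup_left (y_mul_lowerMinor_mem j)
  · exact le_sup_right.trans Ideal.le_colon
  · rw [mem_sup_iff_reduction_mem_map, map_reduction_lowerIdeal_sup_lowerMinor]
    refine mem_ideal_span_X_sq_sup_prod_X_of_X_mul_mem fun j => ?_
    have := mem_sup_iff_reduction_mem_map.1 (Submodule.mem_colon.1 hf _ ⟨j, rfl⟩)
    rwa [smul_eq_mul, mul_comm, map_mul, reduction_y, map_reduction_lowerIdeal] at this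

theorem mem_of_y_zero_mul_mem {f : Rhat n K}
    (h : y 0 * f ∈ lowerIdeal n K ⊔ Ideal.ofList (linearForms n K)) :
    f ∈ lowerIdeal n K ⊔ Ideal.span {lowerMinor n K} ⊔ Ideal.ofList (linearForms n K) := by
  refine colon_range_y_le (Submodule.mem_colon.2 ?_)
  rintro _ ⟨j, rfl⟩
  rw [smul_eq_mul, mul_comm]
  exact y_mul_mem_of_y_zero_mul_mem h j

theorem generator_zero_sub_mem :
    generator 0 - corner * y 0 ∈ Ideal.ofList (linearForms n K) :=
  bidiagonal_mulVec_zero (K := K) (n := n) ▸ generator_sub_bidiagonal_mulVec_mem 0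

theorem isWeaklyRegular_linearForms_quotient :
    IsWeaklyRegular (Rhat n K ⧸ Ideal.span (Set.range generator)) (linearForms n K) := by
  rw [span_range_generator]
  refine (colon_le_and_isWeaklyRegular_quotient_sup_span
    isHomogeneous_lowerIdeal_sup_lowerMinor (fun θ hθ => ⟨1, isHomogeneous_linearForms hθ⟩)
    (fun θ hθ => mem_irrelevant_of_isHomogeneous (isHomogeneous_linearForms hθ) one_ne_zero)
    (sup_le Ideal.le_colon ?_) isWeaklyRegular_linearForms_quotient_lowerIdeal
    fun f hf => ?_).2
  · rw [Ideal.span_singleton_le_iff_mem, Submodule.mem_colon_singleton, smul_eq_mul, generator,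
      mulVec, dotProduct, Finset.mul_sum]
    refine sum_mem fun j _ => ?_
    rw [mul_left_comm, mul_comm (lowerMinor n K)]
    exact Ideal.mul_mem_left _ _ (y_mul_lowerMinor_mem j)
  · rw [Submodule.mem_colon_singleton, smul_eq_mul] at hf
    refine mem_of_y_zero_mul_mem (mem_of_corner_mul_mem ?_)
    have difference_mem : f * (generator 0 - corner * y 0) ∈
        lowerIdeal n K ⊔ Ideal.ofList (linearForms n K) :=
      Ideal.mul_mem_left _ f (Ideal.mem_sup_right generator_zero_sub_mem)
    rw [mul_sub, Submodule.sub_mem_iff_right _ hf] at difference_mem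
    rwa [← mul_assoc, mul_comm]

theorem mul_prod_y_mem {a : Rhat n K} (ha : a ∈ Ideal.span (Set.range X)) :
    a * ∏ j, y j ∈ Ideal.span (Set.range generator) ⊔ Ideal.ofList (linearForms n K) := by
  rw [span_range_generator]
  refine Submodule.mem_colon_singleton.1 (span_range_X_le (le_sup_right.trans Ideal.le_colon)
    (Submodule.mem_colon_singleton.2 ?_) (fun j => Submodule.mem_colon_singleton.2 ?_) ha)
  · have corner_mul_y_mem : corner * y 0 ∈
        lowerIdeal n K ⊔ Ideal.span {generator 0} ⊔ Ideal.ofList (linearForms n K) :=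
      (Submodule.sub_mem_iff_right _ (Ideal.mem_sup_left
        (Ideal.mem_sup_right (Ideal.mem_span_singleton_self _)))).1
          (Ideal.mem_sup_right generator_zero_sub_mem)
    rw [smul_eq_mul, ← Finset.mul_prod_erase _ _ (Finset.mem_univ 0), ← mul_assoc]
    exact Ideal.mul_mem_right _ _ corner_mul_y_mem
  · have difference_mem : y j * (lowerMinor n K - ∏ j, y j) ∈
        lowerIdeal n K ⊔ Ideal.span {generator 0} ⊔ Ideal.ofList (linearForms n K) :=
      Ideal.mul_mem_left _ _ (Ideal.mem_sup_right lowerMinor_sub_prod_y_mem)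
    rw [mul_sub] at difference_mem
    exact (Submodule.sub_mem_iff_right _ (Ideal.mem_sup_left
      (Ideal.mem_sup_left (y_mul_lowerMinor_mem j)))).1 difference_mem

theorem prod_y_notMem [Nontrivial K] :
    (∏ j, y j : Rhat n K) ∉
      Ideal.span (Set.range generator) ⊔ Ideal.ofList (linearForms n K) := by
  rw [span_range_generator, sup_right_comm, sup_comm, Ideal.mem_span_singleton_sup]
  rintro ⟨r, b, hb, prod_eq⟩
  rw [← Finset.mul_prod_erase _ _ (Finset.mem_univ 0)] at prod_eq
  have y_zero_mul_mem : y 0 * (∏ j ∈ Finset.univ.erase 0, y j - r * corner) ∈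
      lowerIdeal n K ⊔ Ideal.ofList (linearForms n K) := by
    rw [mul_sub, ← prod_eq, show r * generator 0 + b - y 0 * (r * corner) =
      b + r * (generator 0 - corner * y 0) by ring]
    exact add_mem hb (Ideal.mul_mem_left _ _ (Ideal.mem_sup_right generator_zero_sub_mem))
  have cofactor_mem : ∏ j ∈ Finset.univ.erase 0, y j ∈
      lowerIdeal n K ⊔ Ideal.span {lowerMinor n K} ⊔ Ideal.ofList (linearForms n K) ⊔
        Ideal.span {corner} :=
    (Submodule.sub_mem_iff_left _ (Ideal.mem_sup_right
      (Ideal.mul_mem_left _ r (Ideal.mem_span_singleton_self _)))).1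
        (Ideal.mem_sup_left (mem_of_y_zero_mul_mem y_zero_mul_mem))
  rw [mem_sup_iff_reduction_mem_map, map_reduction_lowerIdeal_sup_lowerMinor,
    map_prod] at cofactor_mem
  simp only [reduction_y] at cofactor_mem
  exact prod_X_erase_notMem 0 cofactor_mem

theorem isMaximalWeaklyRegular_linearForms [Nontrivial K] :
    IsMaximalWeaklyRegular (Ideal.span (Set.range X))
      (Rhat n K ⧸ Ideal.span (Set.range generator)) (linearForms n K) :=
  .of_quotient isWeaklyRegular_linearForms_quotient prod_y_notMem fun _ => mul_prod_y_mem

theorem exists_isMinimalFreeRes {K : Type*} [Field K] : ∃ β : ℕ → ℕ,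
    IsMinimalFreeRes (Ideal.span (Set.range (X : _ → Rhat n K)))
      (Rhat n K ⧸ Ideal.span (Set.range (generator : _ → Rhat n K))) β ∧
      β (n + 1) ≠ 0 ∧ ∀ i, n + 1 < i → β i = 0 := by
  have isHomogeneous_J : (Ideal.span (Set.range generator)).IsHomogeneous
      (homogeneousSubmodule ((Fin (n + 1) × Fin n) ⊕ Fin n) K) :=
    Ideal.homogeneous_span _ _ (Set.forall_mem_range.2 fun i => ⟨2, isHomogeneous_generator i⟩)
  have J_le : Ideal.span (Set.range generator) ≤
      ((homogeneousSubmodule ((Fin (n + 1) × Fin n) ⊕ Fin n) K)₊).toIdeal :=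
    Ideal.span_le.2 (Set.range_subset_iff.2 fun i =>
      mem_irrelevant_of_isHomogeneous (isHomogeneous_generator i) two_ne_zero)
  obtain ⟨β, hβ⟩ := exists_isMinimalFreeRes_quotient
    (fun _ => isUnit_of_mem_homogeneousSubmodule_zero) isHomogeneous_J J_le
  rw [← span_range_X_eq_irrelevant] at hβ
  have regular := isWeaklyRegular_linearForms_append_corner_cons_y_pow (n := n) (K := K) 1
  simp only [pow_one] at regular
  have betti := hβ.betti_ne_zero_and_eq_zero_of_length_lt regular
    ofList_linearForms_append_corner_cons_y isMaximalWeaklyRegular_linearForms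
  rw [List.length_cons, List.length_ofFn] at betti
  exact ⟨β, hβ, betti⟩

theorem moduleDepth_quotient [Nontrivial K] [IsNoetherianRing K] :
    moduleDepth (Ideal.span (Set.range (X : _ → Rhat n K)))
      (Rhat n K ⧸ Ideal.span (Set.range (generator : _ → Rhat n K))) =
      ((n ^ 2 + n - 1 : ℕ) : ℕ∞) := by
  rw [isMaximalWeaklyRegular_linearForms.moduleDepth_eq, length_linearForms]
  intro θ hθ
  rw [← ofList_linearForms_append_corner_cons_y]
  exact Ideal.subset_span (List.mem_append_left _ hθ)

end Reduction

end RhatJ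

/-- With `X̂` the generic `(n+1)×n` matrix and `J = I₁(X̂Y)`, one has
`projdim (R̂/J) = n+1`, `dim (R̂/J) ≥ n² + n`, `depth (R̂/J) = n² + n − 1 < dim (R̂/J)`;
in particular `R̂/J` is not Cohen–Macaulay. -/
theorem RhatJ_not_cohen_macaulay
    {K : Type*} [Field K] (n : ℕ) (hn : 1 ≤ n)
    (Xv : Fin (n + 1) → Fin n → MvPolynomial ((Fin (n + 1) × Fin n) ⊕ Fin n) K)
    (yv : Fin n → MvPolynomial ((Fin (n + 1) × Fin n) ⊕ Fin n) K)
    (hX : ∀ i j, Xv i j = MvPolynomial.X (Sum.inl (i, j)))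
    (hy : ∀ j, yv j = MvPolynomial.X (Sum.inr j))
    (g : Fin (n + 1) → MvPolynomial ((Fin (n + 1) × Fin n) ⊕ Fin n) K)
    (hg : ∀ i, g i = ∑ j, Xv i j * yv j) :
    (∃ β : ℕ → ℕ,
      IsMinimalFreeRes (Ideal.span (Set.range (MvPolynomial.X :
          ((Fin (n + 1) × Fin n) ⊕ Fin n) → MvPolynomial ((Fin (n + 1) × Fin n) ⊕ Fin n) K)))
        (MvPolynomial ((Fin (n + 1) × Fin n) ⊕ Fin n) K ⧸ Ideal.span (Set.range g)) β ∧
      β (n + 1) ≠ 0 ∧ ∀ i, n + 1 < i → β i = 0) ∧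
    ((n ^ 2 + n : ℕ) : WithBot ℕ∞) ≤
      ringKrullDim (MvPolynomial ((Fin (n + 1) × Fin n) ⊕ Fin n) K ⧸
        Ideal.span (Set.range g)) ∧
    moduleDepth (Ideal.span (Set.range (MvPolynomial.X :
        ((Fin (n + 1) × Fin n) ⊕ Fin n) → MvPolynomial ((Fin (n + 1) × Fin n) ⊕ Fin n) K)))
      (MvPolynomial ((Fin (n + 1) × Fin n) ⊕ Fin n) K ⧸ Ideal.span (Set.range g)) =
      ((n ^ 2 + n - 1 : ℕ) : ℕ∞) ∧
    ((n ^ 2 + n - 1 : ℕ) : WithBot ℕ∞) <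
      ringKrullDim (MvPolynomial ((Fin (n + 1) × Fin n) ⊕ Fin n) K ⧸
        Ideal.span (Set.range g)) := by
  have : NeZero n := ⟨by omega⟩
  obtain rfl : g = RhatJ.generator := by
    funext i
    rw [hg]
    exact Finset.sum_congr rfl fun j _ => by rw [hX, hy]; rfl
  have pred_lt : n ^ 2 + n - 1 < n ^ 2 + n := Nat.sub_lt (by positivity) one_pos
  exact ⟨RhatJ.exists_isMinimalFreeRes, RhatJ.natCast_le_ringKrullDim_quotient,
    RhatJ.moduleDepth_quotient,
    lt_of_lt_of_le (by exact_mod_cast pred_lt) RhatJ.natCast_le_ringKrullDim_quotient⟩
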